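/- arXiv:2109.00792 — 7 statements merged into one kernel-verified Lean document; each statement's English description precedes it below -/
import Mathlib

section
/- Let G be a finite simple graph without isolated edges. If the edge set of G can be partitioned into the edge sets of complete subgraphs each of odd order, then G is total weight (1,3)-choosable. -/
/-!
The proof goes through the Combinatorial Nullstellensatz. Orient every edge `a = ij` and let
`u a = 1_i - 1_j ∈ ℝ^V`. A weighting `x` of the edges is proper when the polynomial
`∏_a (L_a(x) + c_a)` does not vanish, where `L_a(x) = ∑_{e ∋ i} x_e - ∑_{e ∋ j} x_e` and the
constant `c_a` comes from the vertex weights. It suffices to find a monomial of degree `|E|`, with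
every exponent at most `2`, whose coefficient in `∏_a L_a` is nonzero.

Use the pairing of products of linear forms
`⟨∏_a L_a, ∏_b M_b⟩ = ∑_σ ∏_a ⟨L_a, M_{σ a}⟩`, a permanent. Up to the factors `K!` it is diagonal
in the monomial basis, so two polynomials with nonzero pairing share a monomial.
In an odd clique, identified with `ZMod n`, each edge `b = ij` gets the apex `k = (i + j) / 2`; put
`M_b = x_{ik} - x_{jk}`. A given variable `x_{ik}` occurs in only two of the forms `M_b`, because
the apex determines `j` from `i`; hence all exponents in `∏_b M_b` are at most `2`. Moreover
`⟨L_a, M_b⟩ = ⟨u a, u b⟩`, so the pairing of `∏ L_a` with `∏ M_b` is the permanent of a Gram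
matrix. That permanent is, up to a positive factor, the squared norm of the polynomial
`∏_a (z_i - z_j)`, which is nonzero since it does not vanish at points with distinct coordinates.

`exists_apex` constructs the apexes, `sum_prod_mul_symProd_pos` is the positivity of the Gram
permanent, `exists_coeff_ne_zero` produces the monomial, and `exists_choice` applies the
Nullstellensatz.
-/

/-- A total weighting (given by vertex weights `fv` and edge weights `fe`) of a simple
graph `G` is proper if for every edge `{i,j}`, the sums of the weight of the endpoint and
the weights of incident edges differ at `i` and `j`. -/
def ProperTotalWeighting {V : Type*} [Fintype V] [DecidableEq V] (G : SimpleGraph V)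
    [DecidableRel G.Adj] (fv : V → ℝ) (fe : Sym2 V → ℝ) : Prop :=
  ∀ ⦃i j : V⦄, G.Adj i j →
    fv i + ∑ e ∈ G.incidenceFinset i, fe e ≠ fv j + ∑ e ∈ G.incidenceFinset j, fe e

/-- `G` is total weight `(k, k')`-choosable: for every assignment of a set of `k` reals to
each vertex and a set of `k'` reals to each edge, there is a proper total weighting choosing
weights from the assigned sets. -/
def TotalWeightChoosable {V : Type*} [Fintype V] [DecidableEq V] (G : SimpleGraph V)
    [DecidableRel G.Adj] (k k' : ℕ) : Prop :=
  ∀ (Lv : V → Finset ℝ) (Le : Sym2 V → Finset ℝ),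
    (∀ v : V, (Lv v).card = k) → (∀ e ∈ G.edgeFinset, (Le e).card = k') →
    ∃ (fv : V → ℝ) (fe : Sym2 V → ℝ),
      (∀ v : V, fv v ∈ Lv v) ∧ (∀ e ∈ G.edgeFinset, fe e ∈ Le e) ∧
      ProperTotalWeighting G fv fe

set_option linter.unusedSectionVars false

/-! ### Permanents and products of linear forms -/

section Permanents

variable {E W : Type*} [Fintype E] [DecidableEq E] [Fintype W] [DecidableEq W]

/-- The symmetrized product `∑_σ ∏_a M (σ a) (f a)`, i.e. the permanent of the matrix whose columns
are the columns of `M` selected by `f`. It is, up to a product of factorials, the coefficient of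
`∏_a x_{f a}` in the product of the linear forms given by the rows of `M`. -/
def symProd (M : E → W → ℝ) (f : E → W) : ℝ :=
  ∑ σ : Equiv.Perm E, ∏ a, M (σ a) (f a)

lemma symProd_comp (M : E → W → ℝ) (f : E → W) (τ : Equiv.Perm E) :
    symProd M (f ∘ τ) = symProd M f := by
  unfold symProd
  rw [← Equiv.sum_comp (Equiv.mulRight τ) (fun σ : Equiv.Perm E => ∏ a, M (σ a) ((f ∘ τ) a))]
  refine Finset.sum_congr rfl fun σ _ => ?_
  rw [← Equiv.prod_comp τ (fun a => M (σ a) (f a))]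
  rfl

/-- Pairing of two products of linear forms, written as a permanent. -/
lemma sum_prod_mul_symProd (A C : E → W → ℝ) :
    ∑ f : E → W, (∏ a, A a (f a)) * symProd C f
      = ∑ σ : Equiv.Perm E, ∏ a, ∑ w, A a w * C (σ a) w := by
  simp_rw [symProd, Finset.mul_sum, Fintype.prod_sum, Finset.prod_mul_distrib]
  exact Finset.sum_comm

/-- A product over the rows may be symmetrized when summed against a symmetric function `g`. -/
lemma factorial_mul_sum (u : E → W → ℝ) (g : (E → W) → ℝ)
    (hg : ∀ f (τ : Equiv.Perm E), g (f ∘ τ) = g f) :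
    (Fintype.card (Equiv.Perm E) : ℝ) * ∑ f : E → W, (∏ a, u a (f a)) * g f
      = ∑ f : E → W, symProd u f * g f := by
  simp_rw [symProd, Finset.sum_mul]
  rw [Finset.sum_comm]
  have key : ∀ σ : Equiv.Perm E, ∑ f : E → W, (∏ a, u (σ a) (f a)) * g f
      = ∑ f : E → W, (∏ a, u a (f a)) * g f := by
    intro σ
    rw [← Equiv.sum_comp (Equiv.arrowCongr σ.symm (Equiv.refl W))]
    refine Finset.sum_congr rfl fun f _ => ?_
    have h1 : (Equiv.arrowCongr σ.symm (Equiv.refl W)) f = f ∘ σ := by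
      ext a; simp
    rw [h1, hg]
    congr 1
    exact Equiv.prod_comp σ (fun a => u a (f a))
  simp [key]

/-- The permanent of a Gram matrix is positive as soon as some point lies in the kernel of none of
the linear forms: it is a multiple of `∑_f (symProd u f)²`. -/
lemma sum_prod_mul_symProd_pos (u : E → W → ℝ) (x : W → ℝ) (hx : ∀ a, ∑ w, u a w * x w ≠ 0) :
    0 < ∑ f : E → W, (∏ a, u a (f a)) * symProd u f := by
  have hcard : (0 : ℝ) < Fintype.card (Equiv.Perm E) := by exact_mod_cast Fintype.card_pos
  have h1 := factorial_mul_sum u (symProd u) (symProd_comp u)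
  refine pos_of_mul_pos_right (a := (Fintype.card (Equiv.Perm E) : ℝ)) ?_ hcard.le
  rw [h1]
  have hnn : ∀ f ∈ (Finset.univ : Finset (E → W)), 0 ≤ symProd u f * symProd u f :=
    fun f _ => mul_self_nonneg _
  refine lt_of_le_of_ne (Finset.sum_nonneg hnn) fun h0 => ?_
  have hz := (Finset.sum_eq_zero_iff_of_nonneg hnn).1 h0.symm
  have h2 := factorial_mul_sum u (fun f => ∏ a, x (f a))
    (fun f τ => Equiv.prod_comp τ (fun a => x (f a)))
  have h3 : ∑ f : E → W, symProd u f * ∏ a, x (f a) = 0 :=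
    Finset.sum_eq_zero fun f hf => by rw [mul_self_eq_zero.1 (hz f hf), zero_mul]
  have h4 : ∑ f : E → W, (∏ a, u a (f a)) * ∏ a, x (f a) = ∏ a, ∑ w, u a w * x w := by
    simp_rw [Fintype.prod_sum, Finset.prod_mul_distrib]
  rw [h3, h4] at h2
  exact mul_ne_zero hcard.ne' (Finset.prod_ne_zero_iff.2 fun a _ => hx a) h2

/-- The exponent vector of the monomial `∏_a x_{f a}`. -/
noncomputable def expo (f : E → W) : W →₀ ℕ := ∑ a, Finsupp.single (f a) 1

lemma expo_apply (f : E → W) (w : W) :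
    expo f w = (Finset.univ.filter fun a => f a = w).card := by
  simp [expo, Finsupp.finsetSum_apply, Finsupp.single_apply]

lemma degree_expo (f : E → W) : (expo f).degree = Fintype.card E := by
  simp [expo, map_sum]

lemma exists_perm_of_expo_eq (f g : E → W) (h : expo f = expo g) :
    ∃ τ : Equiv.Perm E, g = f ∘ τ := by
  have hc : ∀ w, Nonempty ({a // g a = w} ≃ {a // f a = w}) := by
    intro w
    refine ⟨Fintype.equivOfCardEq ?_⟩
    rw [Fintype.card_subtype, Fintype.card_subtype, ← expo_apply, ← expo_apply, h]
  let φ := fun w => (hc w).some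
  let τ : Equiv.Perm E := (Equiv.sigmaFiberEquiv g).symm.trans
    ((Equiv.sigmaCongrRight φ).trans (Equiv.sigmaFiberEquiv f))
  exact ⟨τ, funext fun a => ((φ (g a)) ⟨a, rfl⟩).2.symm⟩

/-- The coefficients of a product of linear forms. -/
lemma coeff_prod_linear (A : E → W → ℝ) (K : W →₀ ℕ) :
    (∏ a, ∑ w, MvPolynomial.C (A a w) * MvPolynomial.X w).coeff K
      = ∑ f : E → W with expo f = K, ∏ a, A a (f a) := by
  have h : ∀ f : E → W, ∏ a, (MvPolynomial.C (A a (f a)) * MvPolynomial.X (f a))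
      = MvPolynomial.monomial (expo f) (∏ a, A a (f a)) := by
    intro f
    rw [expo, MvPolynomial.monomial_sum_index]
    simp [Finset.prod_mul_distrib, MvPolynomial.X, map_prod]
  rw [Fintype.prod_sum, MvPolynomial.coeff_sum, Finset.sum_filter]
  refine Finset.sum_congr rfl fun f _ => ?_
  rw [h, MvPolynomial.coeff_monomial]

/-- If the forms with rows `A` and `C` pair nontrivially and every variable occurs in at most two of
the forms `C`, then the product of the forms `A` has a monomial with all exponents at most `2`. -/
lemma exists_coeff_ne_zero (A C : E → W → ℝ)
    (hAC : ∑ f : E → W, (∏ a, A a (f a)) * symProd C f ≠ 0)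
    (hC : ∀ w, (Finset.univ.filter fun b => C b w ≠ 0).card ≤ 2) :
    ∃ K : W →₀ ℕ, K.degree = Fintype.card E ∧ (∀ w, K w ≤ 2) ∧
      (∏ a, ∑ w, MvPolynomial.C (A a w) * MvPolynomial.X w).coeff K ≠ 0 := by
  by_contra! hcon
  apply hAC
  rw [← Finset.sum_fiberwise_of_maps_to (t := Finset.univ.image (expo : (E → W) → _))
    (g := expo) (fun f _ => Finset.mem_image_of_mem _ (Finset.mem_univ f))]
  refine Finset.sum_eq_zero fun K _ => ?_
  by_cases hex : ∃ f : E → W, expo f = K ∧ symProd C f ≠ 0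
  · obtain ⟨f, rfl, hf⟩ := hex
    have hle : ∀ w, expo f w ≤ 2 := by
      intro w
      obtain ⟨σ, -, hσ⟩ := Finset.exists_ne_zero_of_sum_ne_zero hf
      rw [Finset.prod_ne_zero_iff] at hσ
      rw [expo_apply]
      refine le_trans (Finset.card_le_card_of_injOn σ ?_ σ.injective.injOn) (hC w)
      intro a ha
      have ha' : f a = w := by simpa using ha
      have := hσ a (Finset.mem_univ a)
      rw [ha'] at this
      simpa using this
    have h0 := hcon (expo f) (degree_expo f) hle
    rw [coeff_prod_linear] at h0
    -- `symProd C` is constant on the functions with a given exponent vector.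
    have hconst : ∀ g ∈ Finset.univ.filter (fun g : E → W => expo g = expo f),
        (∏ a, A a (g a)) * symProd C g = (∏ a, A a (g a)) * symProd C f := by
      intro g hg
      obtain ⟨τ, rfl⟩ := exists_perm_of_expo_eq f g (by simpa using (Finset.mem_filter.1 hg).2.symm)
      rw [symProd_comp]
    rw [Finset.sum_congr rfl hconst, ← Finset.sum_mul, h0, zero_mul]
  · push Not at hex
    refine Finset.sum_eq_zero fun f hf => ?_
    rw [hex f (Finset.mem_filter.1 hf).2, mul_zero]

lemma totalDegree_linear_le (A : W → ℝ) :
    (∑ w, MvPolynomial.C (A w) * MvPolynomial.X w : MvPolynomial W ℝ).totalDegree ≤ 1 := by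
  refine MvPolynomial.totalDegree_finsetSum_le fun w _ => ?_
  refine (MvPolynomial.totalDegree_mul _ _).trans ?_
  simp

lemma totalDegree_affine_le (A : W → ℝ) (c : ℝ) :
    (∑ w, MvPolynomial.C (A w) * MvPolynomial.X w + MvPolynomial.C c :
      MvPolynomial W ℝ).totalDegree ≤ 1 := by
  refine (MvPolynomial.totalDegree_add _ _).trans ?_
  simpa using totalDegree_linear_le A

/-- Constant terms do not affect the coefficients in top degree. -/
lemma coeff_prod_affine (A : E → W → ℝ) (c : E → ℝ) (K : W →₀ ℕ)
    (hK : K.degree = Fintype.card E) :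
    (∏ a, (∑ w, MvPolynomial.C (A a w) * MvPolynomial.X w + MvPolynomial.C (c a))).coeff K
      = (∏ a, ∑ w, MvPolynomial.C (A a w) * MvPolynomial.X w).coeff K := by
  rw [Fintype.prod_add, MvPolynomial.coeff_sum, Finset.sum_eq_single Finset.univ]
  · simp
  · intro t _ ht
    apply MvPolynomial.coeff_eq_zero_of_totalDegree_lt
    have hK' : ∑ i ∈ K.support, K i = Fintype.card E := hK
    rw [hK']
    refine lt_of_le_of_lt (MvPolynomial.totalDegree_mul _ _) ?_
    rw [← map_prod, MvPolynomial.totalDegree_C, add_zero]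
    refine lt_of_le_of_lt (MvPolynomial.totalDegree_finsetProd _ _) ?_
    refine lt_of_le_of_lt (Finset.sum_le_card_nsmul _ _ 1 fun a _ => totalDegree_linear_le _) ?_
    simpa using Finset.card_lt_univ_of_notMem (x := _) (Classical.choose_spec
      (not_forall.1 (mt Finset.eq_univ_iff_forall.2 ht)))
  · simp

/-- Nullstellensatz form of the argument: a Gram-type factorization `A Cᵀ = u uᵀ` with a
column-sparse `C` allows choosing values from lists of size three that avoid the zeros of all affine forms. -/
lemma exists_choice {V : Type*} [Fintype V] [DecidableEq V] (A C : E → W → ℝ) (u : E → V → ℝ)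
    (hAC : ∀ a b, ∑ w, A a w * C b w = ∑ v, u a v * u b v)
    (z : V → ℝ) (hz : ∀ a, ∑ v, u a v * z v ≠ 0)
    (hC : ∀ w, (Finset.univ.filter fun b => C b w ≠ 0).card ≤ 2)
    (c : E → ℝ) (L : W → Finset ℝ) (hL : ∀ w, (L w).card = 3) :
    ∃ x : W → ℝ, (∀ w, x w ∈ L w) ∧ ∀ a, ∑ w, A a w * x w + c a ≠ 0 := by
  have hpair : ∑ f : E → W, (∏ a, A a (f a)) * symProd C f ≠ 0 := by
    rw [sum_prod_mul_symProd]
    simp_rw [hAC]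
    rw [← sum_prod_mul_symProd]
    exact (sum_prod_mul_symProd_pos u z hz).ne'
  obtain ⟨K, hdeg, hK2, hK⟩ := exists_coeff_ne_zero A C hpair hC
  rw [← coeff_prod_affine A c K hdeg] at hK
  obtain ⟨x, hxL, hx⟩ := MvPolynomial.combinatorial_nullstellensatz_exists_eval_nonzero _ K hK
    (le_antisymm
      (by
        refine (MvPolynomial.totalDegree_finsetProd _ _).trans ?_
        refine (Finset.sum_le_card_nsmul _ _ 1 fun a _ => totalDegree_affine_le _ _).trans ?_
        simp [hdeg])
      (MvPolynomial.le_totalDegree (MvPolynomial.mem_support_iff.2 hK)))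
    L (fun w => by rw [hL]; exact Nat.lt_succ_of_le (hK2 w))
  refine ⟨x, hxL, fun a => ?_⟩
  rw [map_prod, Finset.prod_ne_zero_iff] at hx
  simpa using hx a (Finset.mem_univ a)

end Permanents

/-! ### Apexes in odd cliques -/

/-- A set of odd size carries a midpoint operation, transported from `ZMod n`. -/
lemma exists_midpoint {V : Type*} [DecidableEq V] (S : Finset V) (hS : Odd S.card) :
    ∃ m : V → V → V, ∀ i ∈ S, ∀ j ∈ S, m i j ∈ S ∧ m i j = m j i ∧ (m i j = i → j = i) ∧
      ∀ j' ∈ S, m i j = m i j' → j = j' := by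
  have : NeZero S.card := ⟨hS.pos.ne'⟩
  have φ : S ≃ ZMod S.card := Fintype.equivOfCardEq (by simp [ZMod.card])
  obtain ⟨h, hh⟩ : ∃ h : ZMod S.card, 2 * h = 1 := by
    have : IsUnit ((2 : ℕ) : ZMod S.card) :=
      (ZMod.isUnit_iff_coprime _ _).2 (Nat.coprime_two_left.2 hS)
    simpa using this.exists_right_inv
  refine ⟨fun i j => if hij : i ∈ S ∧ j ∈ S then
    (φ.symm ((φ ⟨i, hij.1⟩ + φ ⟨j, hij.2⟩) * h) : S) else i, fun i hi j hj => ?_⟩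
  refine ⟨?_, ?_, ?_, ?_⟩
  · simp [hi, hj]
  · simp [hi, hj, add_comm]
  · intro heq
    simp only [hi, hj, and_self, dite_true] at heq
    have h1 : φ.symm ((φ ⟨i, hi⟩ + φ ⟨j, hj⟩) * h) = ⟨i, hi⟩ := Subtype.ext heq
    rw [Equiv.symm_apply_eq] at h1
    have h2 : φ ⟨j, hj⟩ = φ ⟨i, hi⟩ := by
      linear_combination 2 * h1 - (φ ⟨i, hi⟩ + φ ⟨j, hj⟩) * hh
    simpa using h2
  · intro j' hj' heq
    simp only [hi, hj, hj', and_self, dite_true] at heq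
    have h1 := φ.symm.injective (Subtype.ext heq)
    have h2 : φ ⟨j, hj⟩ = φ ⟨j', hj'⟩ := by
      linear_combination 2 * h1 - (φ ⟨j, hj⟩ - φ ⟨j', hj'⟩) * hh
    simpa using h2

/-- Each edge `ij` gets an apex `k i j` completing it to a triangle, in such a way that an endpoint
and the apex determine the other endpoint. -/
lemma exists_apex {V : Type*} [Fintype V] [DecidableEq V] (G : SimpleGraph V)
    [DecidableRel G.Adj]
    (hdecomp : ∃ 𝒮 : Finset (Finset V),
      (∀ S ∈ 𝒮, G.IsClique (S : Set V) ∧ Odd S.card) ∧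
      (∀ e ∈ G.edgeFinset, ∃! S, S ∈ 𝒮 ∧ ∀ v ∈ e, v ∈ S)) :
    ∃ k : V → V → V, ∀ i j, G.Adj i j → k i j = k j i ∧ G.Adj i (k i j) ∧ G.Adj j (k i j) ∧
      ∀ j', G.Adj i j' → k i j = k i j' → j = j' := by
  obtain ⟨𝒮, h𝒮, hE⟩ := hdecomp
  have hE' : ∀ e : Sym2 V, ∃ S : Finset V, e ∈ G.edgeFinset → S ∈ 𝒮 ∧ ∀ v ∈ e, v ∈ S := by
    intro e
    by_cases he : e ∈ G.edgeFinset
    · obtain ⟨S, hS, -⟩ := hE e he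
      exact ⟨S, fun _ => hS⟩
    · exact ⟨∅, fun h => absurd h he⟩
  choose cl hcl using hE'
  have hm : ∀ S : Finset V, ∃ m : V → V → V, S ∈ 𝒮 →
      ∀ i ∈ S, ∀ j ∈ S, m i j ∈ S ∧ m i j = m j i ∧ (m i j = i → j = i) ∧
      ∀ j' ∈ S, m i j = m i j' → j = j' := by
    intro S
    by_cases hS : S ∈ 𝒮
    · obtain ⟨m, hm⟩ := exists_midpoint S (h𝒮 S hS).2
      exact ⟨m, fun _ => hm⟩
    · exact ⟨fun i _ => i, fun h => absurd h hS⟩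
  choose m hm using hm
  have hcl' : ∀ i j, G.Adj i j → cl s(i, j) ∈ 𝒮 ∧ i ∈ cl s(i, j) ∧ j ∈ cl s(i, j) := by
    intro i j hij
    obtain ⟨h1, h2⟩ := hcl s(i, j) (by simpa using hij)
    exact ⟨h1, h2 i (by simp), h2 j (by simp)⟩
  have hadj : ∀ i j, G.Adj i j → G.Adj i (m (cl s(i, j)) i j) := by
    intro i j hij
    obtain ⟨h1, h2, h3⟩ := hcl' i j hij
    obtain ⟨h4, h5, h6, h7⟩ := hm _ h1 i h2 j h3
    exact (h𝒮 _ h1).1 h2 h4 fun h => hij.ne (h6 h.symm).symm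
  refine ⟨fun i j => m (cl s(i, j)) i j, fun i j hij => ?_⟩
  have hsymm : m (cl s(i, j)) i j = m (cl s(j, i)) j i := by
    obtain ⟨h1, h2, h3⟩ := hcl' i j hij
    rw [Sym2.eq_swap (a := j)]
    exact (hm _ h1 i h2 j h3).2.1
  refine ⟨hsymm, hadj i j hij, ?_, fun j' hij' heq => ?_⟩
  · simp only [hsymm]
    exact hadj j i hij.symm
  · simp only at heq
    obtain ⟨h1, h2, h3⟩ := hcl' i j hij
    obtain ⟨hh1', hh2', hh3'⟩ := hcl' i j' hij'
    have hk' := (hm _ hh1' i hh2' j' hh3').1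
    have hk := (hm _ h1 i h2 j h3).1
    -- Both cliques contain the edge from `i` to the common apex, so they coincide.
    have hS : cl s(i, j) = cl s(i, j') := by
      refine (hE s(i, m (cl s(i, j)) i j) (by simpa using hadj i j hij)).unique ⟨h1, ?_⟩ ⟨hh1', ?_⟩
      · simp [h2, hk]
      · rw [heq]
        simp [hh2', hk']
    rw [← hS] at heq hh3'
    have hcancel := (hm _ h1 i h2 j h3).2.2.2 j' hh3'
    exact hcancel heq

/-! ### From the polynomial to edge weights -/

/-- If a finite simple graph without isolated edges has its edge set partitioned into the
edge sets of complete subgraphs of odd order, then it is total weight `(1,3)`-choosable. -/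
theorem dense_eulerian_stmt0 {V : Type*} [Fintype V] [DecidableEq V] (G : SimpleGraph V)
    [DecidableRel G.Adj]
    (hnice : ∀ ⦃i j : V⦄, G.Adj i j → 2 ≤ G.degree i ∨ 2 ≤ G.degree j)
    (hdecomp : ∃ 𝒮 : Finset (Finset V),
      (∀ S ∈ 𝒮, G.IsClique (S : Set V) ∧ Odd S.card) ∧
      (∀ e ∈ G.edgeFinset, ∃! S, S ∈ 𝒮 ∧ ∀ v ∈ e, v ∈ S)) :
    TotalWeightChoosable G 1 3 := by
  obtain ⟨k, hk⟩ := exists_apex G hdecomp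
  intro Lv Le hLv hLe
  have hne : ∀ v, (Lv v).Nonempty := fun v => Finset.card_pos.1 (by rw [hLv v]; exact one_pos)
  choose fv hfv using hne
  -- An arbitrary orientation of the edges.
  have hor : ∀ a : G.edgeFinset, ∃ p : V × V, a.1 = s(p.1, p.2) ∧ G.Adj p.1 p.2 := by
    rintro ⟨a, ha⟩
    induction a with
    | h i j => exact ⟨(i, j), rfl, by simpa using ha⟩
  choose p hp hpadj using hor
  let B : V → G.edgeFinset → ℝ := fun v e => if v ∈ e.1 then 1 else 0
  let u : G.edgeFinset → V → ℝ := fun a v =>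
    (if v = (p a).1 then 1 else 0) - (if v = (p a).2 then 1 else 0)
  let A : G.edgeFinset → G.edgeFinset → ℝ := fun a e => B (p a).1 e - B (p a).2 e
  let q : G.edgeFinset → V := fun b => k (p b).1 (p b).2
  let C : G.edgeFinset → G.edgeFinset → ℝ := fun b e =>
    (if e.1 = s((p b).1, q b) then 1 else 0) - (if e.1 = s((p b).2, q b) then 1 else 0)
  have hu : ∀ a (z : V → ℝ), ∑ v, u a v * z v = z (p a).1 - z (p a).2 := by
    intro a z
    simp [u, sub_mul, Finset.sum_sub_distrib]
  have hBC : ∀ v b, ∑ e, B v e * C b e = u b v := by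
    intro v b
    obtain ⟨-, h1, h2, -⟩ := hk _ _ (hpadj b)
    have hpick : ∀ i j, G.Adj i j → ∑ e : G.edgeFinset, B v e * (if e.1 = s(i, j) then 1 else 0)
        = if v = i ∨ v = j then 1 else 0 := by
      intro i j hij
      rw [Finset.sum_eq_single ⟨s(i, j), by simpa using hij⟩]
      · simp [B]
      · intro e _ he
        rw [if_neg fun h => he (Subtype.ext h), mul_zero]
      · simp
    simp only [C, mul_sub, Finset.sum_sub_distrib]
    rw [hpick _ _ h1, hpick _ _ h2]
    have n1 := h1.ne
    have n2 := h2.ne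
    simp only [u]
    by_cases hv : v = k (p b).1 (p b).2
    · have m1 : v ≠ (p b).1 := fun h => n1 (h.symm.trans hv)
      have m2 : v ≠ (p b).2 := fun h => n2 (h.symm.trans hv)
      rw [if_pos (Or.inr hv), if_pos (Or.inr hv), if_neg m1, if_neg m2, sub_self, sub_self]
    · simp [hv]
  have hAC : ∀ a b, ∑ e, A a e * C b e = ∑ v, u a v * u b v := by
    intro a b
    rw [hu a (u b), ← hBC, ← hBC, ← Finset.sum_sub_distrib]
    exact Finset.sum_congr rfl fun e _ => sub_mul _ _ _
  -- If `x_e` occurs in the form of `b`, then `b` leads from an endpoint of `e` to a vertex such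
  -- that the apex is the other endpoint of `e`.
  have hocc : ∀ b e : G.edgeFinset, C b e ≠ 0 →
      ∃ i j, b.1 = s(i, j) ∧ G.Adj i j ∧ e.1 = s(i, k i j) := by
    intro b e hbe
    by_cases h1 : e.1 = s((p b).1, q b)
    · exact ⟨_, _, hp b, hpadj b, h1⟩
    by_cases h2 : e.1 = s((p b).2, q b)
    · refine ⟨(p b).2, (p b).1, by rw [hp b, Sym2.eq_swap], (hpadj b).symm, ?_⟩
      rw [h2, ← (hk _ _ (hpadj b)).1]
    · exact absurd (by simp only [C, if_neg h1, if_neg h2, sub_zero]) hbe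
  have hC : ∀ e, (Finset.univ.filter fun b => C b e ≠ 0).card ≤ 2 := by
    intro e
    let T : V → V → Finset G.edgeFinset := fun v w =>
      Finset.univ.filter fun b => ∃ j, b.1 = s(v, j) ∧ G.Adj v j ∧ k v j = w
    have hT : ∀ v w, (T v w).card ≤ 1 := by
      intro v w
      refine Finset.card_le_one.2 fun b hb b' hb' => ?_
      obtain ⟨j, h1, h2, h3⟩ := (Finset.mem_filter.1 hb).2
      obtain ⟨j', h1', h2', h3'⟩ := (Finset.mem_filter.1 hb').2
      have := (hk v j h2).2.2.2 j' h2' (h3.trans h3'.symm)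
      exact Subtype.ext (by rw [h1, h1', this])
    have hsub : (Finset.univ.filter fun b => C b e ≠ 0)
        ⊆ T (p e).1 (p e).2 ∪ T (p e).2 (p e).1 := by
      intro b hb
      obtain ⟨i, j, h1, h2, h3⟩ := hocc b e (Finset.mem_filter.1 hb).2
      rw [hp e, Sym2.eq_iff] at h3
      simp only [Finset.mem_union, T, Finset.mem_filter, Finset.mem_univ, true_and]
      rcases h3 with ⟨h4, h5⟩ | ⟨h4, h5⟩
      · exact Or.inl ⟨j, by rw [h1, h4], h4 ▸ h2, by rw [h4, h5]⟩
      · exact Or.inr ⟨j, by rw [h1, h5], h5 ▸ h2, by rw [h4, h5]⟩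
    exact (Finset.card_le_card hsub).trans ((Finset.card_union_le _ _).trans
      (add_le_add (hT _ _) (hT _ _)))
  -- Distinct reals attached to the vertices.
  let z : V → ℝ := fun v => ((Fintype.equivFin V v : ℕ) : ℝ)
  have hz : ∀ a, ∑ v, u a v * z v ≠ 0 := by
    intro a h
    rw [hu, sub_eq_zero] at h
    exact (hpadj a).ne ((Fintype.equivFin V).injective (Fin.ext (Nat.cast_injective h)))
  obtain ⟨x, hxL, hx⟩ := exists_choice A C u hAC z hz hC
    (fun a => fv (p a).1 - fv (p a).2) (fun e => Le e.1) (fun e => hLe e.1 e.2)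
  let fe : Sym2 V → ℝ := fun e => if he : e ∈ G.edgeFinset then x ⟨e, he⟩ else 0
  have hfe : ∀ e : G.edgeFinset, fe e.1 = x e := fun e => dif_pos e.2
  have hsum : ∀ v, ∑ e ∈ G.incidenceFinset v, fe e = ∑ e, B v e * x e := by
    intro v
    rw [SimpleGraph.incidenceFinset_eq_filter, Finset.sum_filter, ← Finset.sum_coe_sort]
    refine Finset.sum_congr rfl fun e _ => ?_
    simp [B, hfe]
  have hedge : ∀ a, fv (p a).1 + ∑ e ∈ G.incidenceFinset (p a).1, fe e
      ≠ fv (p a).2 + ∑ e ∈ G.incidenceFinset (p a).2, fe e := by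
    intro a h
    apply hx a
    rw [hsum, hsum] at h
    simp only [A, sub_mul, Finset.sum_sub_distrib]
    linarith
  refine ⟨fv, fe, hfv, fun e he => ?_, fun i j hij => ?_⟩
  · rw [hfe ⟨e, he⟩]
    exact hxL ⟨e, he⟩
  · have hmem : s(i, j) ∈ G.edgeFinset := by simpa using hij
    have h := hedge ⟨s(i, j), hmem⟩
    rcases Sym2.eq_iff.1 (hp ⟨s(i, j), hmem⟩) with ⟨h1, h2⟩ | ⟨h1, h2⟩
    · rwa [← h1, ← h2] at h
    · rw [← h1, ← h2] at h
      exact h.symm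
end

section
/- There exists n₀ such that every Eulerian graph G on n ≥ n₀ vertices (i.e., G is connected and every vertex has even degree) with minimum degree at least 0.91 n is total weight (1,3)-choosable. -/
section

open MvPolynomial

/-! ### Spans of products of linear forms -/

/-- The linear form with coefficient vector `c`, as a polynomial. -/
noncomputable def linForm {σ : Type*} [Fintype σ] (c : σ → ℝ) : MvPolynomial σ ℝ :=
  ∑ v, C (c v) * X v

/-- The substitution `f ↦ f (X + t h)`, a polynomial in `t` over the ring of polynomials in `X`.
Its degree in `t` is the degree of `f` along the direction `h`. -/
noncomputable def lineShift {σ : Type*} (h : σ → ℝ) :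
    MvPolynomial σ ℝ →ₐ[ℝ] Polynomial (MvPolynomial σ ℝ) :=
  aeval fun v => Polynomial.C (X v) + Polynomial.C (C (h v)) * Polynomial.X

lemma linForm_sub_smul {σ : Type*} [Fintype σ] (c d : σ → ℝ) (r : ℝ) :
    linForm (c - r • d) = linForm c - C r * linForm d := by
  simp only [linForm, Pi.sub_apply, Pi.smul_apply, smul_eq_mul, map_sub, map_mul, sub_mul,
    Finset.sum_sub_distrib, Finset.mul_sum, mul_assoc]

lemma lineShift_C {σ : Type*} (h : σ → ℝ) (r : ℝ) :
    lineShift h (C r) = Polynomial.C (C r) := by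
  rw [← algebraMap_eq, AlgHom.commutes, Polynomial.algebraMap_apply]

lemma lineShift_X {σ : Type*} (h : σ → ℝ) (v : σ) :
    lineShift h (X v) = Polynomial.C (X v) + Polynomial.C (C (h v)) * Polynomial.X := by
  simp [lineShift]

lemma lineShift_linForm {σ : Type*} [Fintype σ] (h c : σ → ℝ) :
    lineShift h (linForm c) =
      Polynomial.C (C (∑ v, c v * h v)) * Polynomial.X + Polynomial.C (linForm c) := by
  simp only [linForm, map_sum, map_mul, lineShift_X, lineShift_C, mul_add,
    Finset.sum_add_distrib, Finset.sum_mul]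
  rw [add_comm]
  simp only [mul_assoc]

lemma natDegree_lineShift_linForm {σ : Type*} [Fintype σ] (h c : σ → ℝ) :
    (lineShift h (linForm c)).natDegree = if ∑ v, c v * h v ≠ 0 then 1 else 0 := by
  rw [lineShift_linForm]
  split_ifs with hc
  · exact Polynomial.natDegree_linear ((map_ne_zero_iff _ (C_injective σ ℝ)).2 hc)
  · rw [not_not.1 hc]; simp

lemma coeff_linForm {σ : Type*} [Fintype σ] [DecidableEq σ] (c : σ → ℝ) (v : σ) :
    coeff (Finsupp.single v 1) (linForm c) = c v := by
  simp [linForm, coeff_sum, coeff_C_mul, coeff_X, Finsupp.single_left_inj]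

lemma linForm_zero_iff {σ : Type*} [Fintype σ] {c : σ → ℝ} :
    linForm c = 0 ↔ c = 0 := by
  classical
  refine ⟨fun h => ?_, fun h => by simp [h, linForm]⟩
  ext v; rw [← coeff_linForm c v, h]; simp

lemma lineShift_ne_zero {σ : Type*} (h : σ → ℝ) {f : MvPolynomial σ ℝ} (hf : f ≠ 0) :
    lineShift h f ≠ 0 := by
  intro h0
  apply hf
  -- setting `t = 0` recovers `f`
  have : ((Polynomial.aeval (0 : MvPolynomial σ ℝ)).restrictScalars ℝ).comp (lineShift h)
      = AlgHom.id ℝ _ := by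
    ext v; simp [lineShift]
  simpa [h0] using (DFunLike.congr_fun this f).symm

/-- Let `a i`, `i ∈ s`, be linear forms. A polynomial whose degree along every direction `h` is at
most the number of forms not vanishing at `h` is a linear combination of products of subfamilies.
By induction on `s`: modulo a nonzero form `a j`, i.e. on its kernel, `f` agrees with a combination
`g` of products of the other forms, and the quotient `(f - g) / a j` again satisfies the degree
condition for the other forms. The kernel is handled as the image of a projection `π` of the whole
space, so that the ambient polynomial ring does not change. -/
theorem mem_span_prod_linForm {σ ι : Type*} [Fintype σ] [DecidableEq ι] (s : Finset ι) :
    ∀ (a : ι → σ → ℝ) (f : MvPolynomial σ ℝ),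
      (∀ h : σ → ℝ, (lineShift h f).natDegree ≤ (s.filter fun i => ∑ v, a i v * h v ≠ 0).card) →
      f ∈ Submodule.span ℝ ((fun T : Finset ι => ∏ i ∈ T, linForm (a i)) '' {T | T ⊆ s}) := by
  classical
  induction s using Finset.induction_on with
  | empty =>
    intro a f hf
    have hC : f = C (coeff 0 f) := by
      refine MvPolynomial.funext fun h => ?_
      -- `f (0 + t h)` does not depend on `t`; compare `t = 1` with `t = 0`
      have h1 : (lineShift h f).natDegree = 0 := by simpa using hf h
      obtain ⟨g, hg⟩ := Polynomial.natDegree_eq_zero.1 h1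
      have key : ∀ t : ℝ, eval 0 ((lineShift h f).eval (C t)) = eval (fun v => t * h v) f := by
        intro t
        have : ((aeval (0 : σ → ℝ)).comp
            ((Polynomial.aeval (C t : MvPolynomial σ ℝ)).restrictScalars ℝ)).comp (lineShift h)
            = aeval (fun v => t * h v) := by
          ext v
          simp [lineShift_X]
          exact mul_comm _ _
        exact DFunLike.congr_fun this f
      have e1 := key 1
      have e0 := key 0
      rw [← hg, Polynomial.eval_C] at e0 e1
      rw [e0] at e1
      simp only [one_mul, zero_mul] at e1
      rw [← e1, eval_C]
      exact DFunLike.congr_fun (eval_zero (R := ℝ) (σ := σ)) f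
    rw [hC, C_eq_smul_one]
    exact Submodule.smul_mem _ _ (Submodule.subset_span ⟨∅, by simp, by simp⟩)
  | insert j s hj ih =>
    intro a f hf
    have hmono : Submodule.span ℝ ((fun T : Finset ι => ∏ i ∈ T, linForm (a i)) '' {T | T ⊆ s}) ≤
        Submodule.span ℝ ((fun T : Finset ι => ∏ i ∈ T, linForm (a i)) '' {T | T ⊆ insert j s}) :=
      Submodule.span_mono (Set.image_mono fun T hT => hT.trans (Finset.subset_insert _ _))
    by_cases haj : a j = 0
    · refine hmono (ih a f fun h => (hf h).trans_eq ?_)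
      rw [Finset.filter_insert, if_neg (by simp [haj])]
    obtain ⟨v₀, hv₀⟩ : ∃ v, a j v ≠ 0 := Function.ne_iff.1 haj
    -- `π f` is `f` composed with the projection `x ↦ x - a j (x) w` onto the kernel of `a j`
    set w : σ → ℝ := Pi.single v₀ (a j v₀)⁻¹ with hw
    have haw : ∑ v, a j v * w v = 1 := by
      simp [hw, Pi.single_apply, hv₀]
    let π : MvPolynomial σ ℝ →ₐ[ℝ] MvPolynomial σ ℝ := aeval fun v => X v - C (w v) * linForm (a j)
    have hπC : ∀ r : ℝ, π (C r) = C r := fun r => by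
      rw [← algebraMap_eq, AlgHom.commutes]
    have hπX : ∀ v, π (X v) = X v - C (w v) * linForm (a j) := fun v => aeval_X _ _
    have hπlin : ∀ c : σ → ℝ, π (linForm c) = linForm (c - (∑ v, c v * w v) • a j) := by
      intro c
      rw [linForm_sub_smul]
      simp only [linForm, map_sum, map_mul, hπC, hπX, mul_sub, Finset.sum_sub_distrib,
        Finset.sum_mul, mul_assoc]
    have hdiv : ∀ g : MvPolynomial σ ℝ, linForm (a j) ∣ g - π g := by
      intro g
      rw [← Ideal.mem_span_singleton, ← Ideal.Quotient.eq]
      have : (Ideal.Quotient.mkₐ ℝ (Ideal.span {linForm (a j)})) =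
          (Ideal.Quotient.mkₐ ℝ (Ideal.span {linForm (a j)})).comp π := by
        ext v
        simp only [Ideal.Quotient.mkₐ_eq_mk, AlgHom.comp_apply, π, aeval_X]
        rw [Ideal.Quotient.eq, Ideal.mem_span_singleton]
        exact ⟨C (w v), by ring⟩
      exact DFunLike.congr_fun this g
    have hπshift : ∀ h : σ → ℝ, (lineShift h (π f)).natDegree ≤
        (lineShift (fun v => h v - (∑ u, a j u * h u) * w v) f).natDegree := by
      intro h
      have : (lineShift h).comp π =
          (Polynomial.mapAlgHom π).comp
            (lineShift (fun v => h v - (∑ u, a j u * h u) * w v)) := by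
        ext1 v
        simp only [AlgHom.comp_apply, hπX, map_sub, map_mul, map_add, lineShift_linForm,
          lineShift_C, lineShift_X, Polynomial.coe_mapAlgHom, Polynomial.map_C,
          Polynomial.map_X, RingHom.coe_coe, hπC]
        ring
      have h2 := DFunLike.congr_fun this f
      simp only [AlgHom.comp_apply, Polynomial.coe_mapAlgHom] at h2
      rw [h2]
      exact Polynomial.natDegree_map_le
    -- a direction in the kernel of `a j` does not see `a j`, so `s` alone suffices for `π f`
    have hres := ih (fun i => a i - (∑ v, a i v * w v) • a j) (π f) (fun h => by
      refine (hπshift h).trans ((hf _).trans ?_)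
      rw [Finset.filter_insert, if_neg]
      · refine Finset.card_le_card fun i hi => ?_
        rw [Finset.mem_filter] at hi ⊢
        refine ⟨hi.1, fun h0 => hi.2 ?_⟩
        rw [← h0]
        simp only [mul_sub, sub_mul, Finset.sum_sub_distrib, Pi.sub_apply, Pi.smul_apply,
          smul_eq_mul, Finset.sum_mul, Finset.mul_sum]
        congr 1
        rw [Finset.sum_comm]
        refine Finset.sum_congr rfl fun x _ => Finset.sum_congr rfl fun y _ => by ring
      · rw [not_not]
        simp only [mul_sub, Finset.sum_sub_distrib]
        rw [sub_eq_zero]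
        calc ∑ v, a j v * h v = (∑ u, a j u * h u) * ∑ v, a j v * w v := by rw [haw, mul_one]
          _ = _ := by rw [Finset.mul_sum]; exact Finset.sum_congr rfl fun x _ => by ring)
    obtain ⟨g, hg, hgf⟩ : ∃ g ∈ Submodule.span ℝ
        ((fun T : Finset ι => ∏ i ∈ T, linForm (a i)) '' {T | T ⊆ s}), π g = π f := by
      have : (fun T : Finset ι => ∏ i ∈ T, linForm (a i - (∑ v, a i v * w v) • a j)) '' {T | T ⊆ s}
          = π.toLinearMap '' ((fun T : Finset ι => ∏ i ∈ T, linForm (a i)) '' {T | T ⊆ s}) := by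
        rw [Set.image_image]
        refine Set.image_congr fun T _ => ?_
        simp [map_prod, hπlin]
      rw [this, Submodule.span_image] at hres
      exact hres
    obtain ⟨q, hq⟩ := hdiv (f - g)
    rw [map_sub, hgf, sub_self, sub_zero] at hq
    have hgdeg : ∀ h : σ → ℝ, (lineShift h g).natDegree ≤
        (s.filter fun i => ∑ v, a i v * h v ≠ 0).card := by
      intro h
      clear hgf hq
      induction hg using Submodule.span_induction with
      | mem x hx =>
        obtain ⟨T, hT, rfl⟩ := hx
        simp only [map_prod]
        refine (Polynomial.natDegree_prod_le _ _).trans ?_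
        simp only [natDegree_lineShift_linForm, ← Finset.card_filter]
        exact Finset.card_le_card (Finset.filter_subset_filter _ hT)
      | zero => simp
      | add x y _ _ hx hy =>
        rw [map_add]
        exact Polynomial.natDegree_add_le_of_degree_le hx hy
      | smul c x _ hx =>
        rw [map_smul]
        exact (Polynomial.natDegree_smul_le _ _).trans hx
    have hf' : f = g + linForm (a j) * q := by rw [← hq]; ring
    rw [hf']
    refine Submodule.add_mem _ (hmono hg) ?_
    have hqs : q ∈ Submodule.span ℝ
        ((fun T : Finset ι => ∏ i ∈ T, linForm (a i)) '' {T | T ⊆ s}) := by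
      refine ih a q fun h => ?_
      by_cases hq0 : q = 0
      · simp [hq0]
      have h1 : (lineShift h (f - g)).natDegree ≤
          ((insert j s).filter fun i => ∑ v, a i v * h v ≠ 0).card := by
        rw [map_sub]
        refine (Polynomial.natDegree_sub_le_of_le (hf h) ((hgdeg h).trans
          (Finset.card_le_card (Finset.filter_subset_filter _ (Finset.subset_insert j s))))).trans ?_
        simp
      rw [hq, map_mul, Polynomial.natDegree_mul
        (lineShift_ne_zero _ (mt linForm_zero_iff.1 haj)) (lineShift_ne_zero _ hq0),
        natDegree_lineShift_linForm, Finset.filter_insert] at h1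
      split_ifs at h1 with hc
      · rw [Finset.card_insert_of_notMem (by simp [hj])] at h1
        omega
      · omega
    clear hq hf'
    induction hqs using Submodule.span_induction with
    | mem x hx =>
      obtain ⟨T, hT, rfl⟩ := hx
      refine Submodule.subset_span ⟨insert j T, Finset.insert_subset_insert _ hT, ?_⟩
      exact Finset.prod_insert fun h => hj (hT h)
    | zero => simp
    | add x y _ _ hx hy => rw [mul_add]; exact Submodule.add_mem _ hx hy
    | smul c x _ hx => rw [mul_smul_comm]; exact Submodule.smul_mem _ _ hx

/-! ### The apolar pairing and the algebraic criterion -/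

/-- The apolar (Bombieri) pairing `∑ m, m! * coeff m p * coeff m q`, where `m! = ∏ i, (m i)!`. -/
noncomputable def apolar (σ : Type*) [Fintype σ] :
    MvPolynomial σ ℝ →ₗ[ℝ] MvPolynomial σ ℝ →ₗ[ℝ] ℝ :=
  (basisMonomials σ ℝ).constr ℝ fun m => ((∏ i, (m i).factorial : ℕ) : ℝ) • lcoeff ℝ m

lemma apolar_monomial {σ : Type*} [Fintype σ] (m : σ →₀ ℕ) (r : ℝ) (q : MvPolynomial σ ℝ) :
    apolar σ (monomial m r) q = r * (((∏ i, (m i).factorial : ℕ) : ℝ) * coeff m q) := by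
  have h : monomial m r = r • basisMonomials σ ℝ m := by
    simp [smul_monomial]
  rw [h, map_smul, apolar, Module.Basis.constr_basis]
  rfl

/-- Multiplication by a variable is adjoint to the partial derivative. -/
lemma apolar_X_mul {σ : Type*} [Fintype σ] (u : σ) (p q : MvPolynomial σ ℝ) :
    apolar σ (X u * p) q = apolar σ p (pderiv u q) := by
  classical
  induction p using MvPolynomial.induction_on' with
  | add p₁ p₂ h₁ h₂ => simp only [mul_add, map_add, LinearMap.add_apply, h₁, h₂]
  | monomial m r =>
    rw [show X u * monomial m r = monomial (m + Finsupp.single u 1) r by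
      rw [X, monomial_mul, one_mul, add_comm], apolar_monomial, apolar_monomial, coeff_pderiv]
    have : ∏ i, ((m + Finsupp.single u 1 : σ →₀ ℕ) i).factorial = (m u + 1) * ∏ i, (m i).factorial := by
      rw [← Finset.mul_prod_erase _ _ (Finset.mem_univ u),
        ← Finset.mul_prod_erase Finset.univ (fun i => (m i).factorial) (Finset.mem_univ u),
        ← mul_assoc]
      congr 1
      · simp [Nat.factorial_succ]
      · refine Finset.prod_congr rfl fun i hi => ?_
        simp [(Finset.ne_of_mem_erase hi).symm]
    rw [this]
    push_cast
    ring

lemma apolar_self_pos {σ : Type*} [Fintype σ] {p : MvPolynomial σ ℝ} (hp : p ≠ 0) :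
    0 < apolar σ p p := by
  have h : ∀ q, apolar σ p q =
      ∑ m ∈ p.support, coeff m p * (((∏ i, (m i).factorial : ℕ) : ℝ) * coeff m q) := by
    intro q
    conv_lhs => rw [p.as_sum, map_sum, LinearMap.sum_apply]
    simp only [apolar_monomial]
  rw [h]
  refine Finset.sum_pos (fun m hm => ?_) (by simpa [Finset.nonempty_iff_ne_empty] using hp)
  have h1 : 0 < coeff m p * coeff m p := mul_self_pos.2 (mem_support_iff.1 hm)
  have h2 : (0 : ℝ) < ((∏ i, (m i).factorial : ℕ) : ℝ) := by
    exact_mod_cast Finset.prod_pos fun i _ => Nat.factorial_pos _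
  nlinarith [mul_pos h1 h2]

/-- The substitutions `X e ↦ ∑ v, B e v * X v` and `X v ↦ ∑ e, B e v * X e`, given by transposed
matrices, are adjoint for the apolar pairings. -/
lemma apolar_aeval_linForm {V E : Type*} [Fintype V] [Fintype E] (B : E → V → ℝ)
    (p : MvPolynomial E ℝ) : ∀ q : MvPolynomial V ℝ,
    apolar V (aeval (fun e => linForm (B e)) p) q =
      apolar E p (aeval (fun v => linForm fun e => B e v) q) := by
  classical
  induction p using MvPolynomial.induction_on with
  | C r =>
    intro q
    rw [← algebraMap_eq, AlgHom.commutes, algebraMap_eq, algebraMap_eq, C_apply, C_apply,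
      apolar_monomial, apolar_monomial]
    congr 2
    · simp
    · have : (constantCoeff (R := ℝ) (σ := E)).comp
          (aeval (R := ℝ) (fun v => linForm fun e => B e v)).toRingHom =
          constantCoeff (R := ℝ) (σ := V) := by
        ext v <;> simp [linForm]
      exact (DFunLike.congr_fun this q).symm
  | add p₁ p₂ h₁ h₂ =>
    intro q
    simp only [map_add, LinearMap.add_apply, h₁, h₂]
  | mul_X p e hp =>
    intro q
    have hchain : pderiv e (aeval (fun v => linForm fun e => B e v) q) =
        aeval (fun v => linForm fun e => B e v) (∑ v, C (B e v) * pderiv v q) := by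
      induction q using MvPolynomial.induction_on with
      | C r => simp
      | add q₁ q₂ h₁ h₂ => simp only [map_add, h₁, h₂, mul_add, Finset.sum_add_distrib]
      | mul_X q v hq =>
        have h1 : pderiv e (linForm fun e => B e v) = C (B e v) := by
          simp [linForm, pderiv_X, Pi.single_apply]
        have h2 : ∑ u, C (B e u) * pderiv u (q * X v) =
            (∑ u, C (B e u) * pderiv u q) * X v + q * C (B e v) := by
          simp only [pderiv_mul, mul_add, Finset.sum_add_distrib, Finset.sum_mul, mul_assoc]
          congr 1
          simp [pderiv_X, Pi.single_apply, mul_comm]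
        rw [h2, map_mul, pderiv_mul, hq, aeval_X, h1, map_add, map_mul, map_mul, aeval_X]
        simp
    rw [mul_comm, apolar_X_mul, hchain, ← hp, map_mul, aeval_X]
    simp only [linForm, Finset.sum_mul, map_sum, LinearMap.sum_apply]
    refine Finset.sum_congr rfl fun v _ => ?_
    simp only [C_mul', smul_mul_assoc, map_smul, LinearMap.smul_apply, apolar_X_mul]

lemma linForm_isHomogeneous {σ : Type*} [Fintype σ] (c : σ → ℝ) : (linForm c).IsHomogeneous 1 :=
  IsHomogeneous.sum _ _ _ fun v _ => by
    simpa using (isHomogeneous_C σ (c v)).mul (isHomogeneous_X ℝ v)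

/-- Adding constants to linear factors does not change the top-degree part of their product. -/
lemma prod_add_C_top {σ ι : Type*} [DecidableEq ι] (l : ι → MvPolynomial σ ℝ) (c : ι → ℝ)
    (hl : ∀ i, (l i).IsHomogeneous 1) (s : Finset ι) (m : σ →₀ ℕ) (hm : s.card ≤ m.degree) :
    coeff m (∏ i ∈ s, (l i + C (c i))) = coeff m (∏ i ∈ s, l i) := by
  have hdeg : ∀ i, (l i + C (c i)).totalDegree ≤ 1 := fun i =>
    (totalDegree_add _ _).trans (max_le (hl i).totalDegree_le (by simp))
  have key : ∏ i ∈ s, (l i + C (c i)) - ∏ i ∈ s, l i = 0 ∨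
      (∏ i ∈ s, (l i + C (c i)) - ∏ i ∈ s, l i).totalDegree < s.card := by
    induction s using Finset.induction_on with
    | empty => simp
    | insert a s ha ih =>
      right
      rw [Finset.prod_insert ha, Finset.prod_insert ha, Finset.card_insert_of_notMem ha,
        Nat.lt_succ_iff]
      have : (l a + C (c a)) * ∏ i ∈ s, (l i + C (c i)) - l a * ∏ i ∈ s, l i =
        (l a + C (c a)) * (∏ i ∈ s, (l i + C (c i)) - ∏ i ∈ s, l i) + C (c a) * ∏ i ∈ s, l i := by
        ring
      rw [this]
      refine (totalDegree_add _ _).trans (max_le ?_ ?_)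
      · rcases ih (by rw [Finset.card_insert_of_notMem ha] at hm; omega) with h | h
        · simp [h]
        · refine (totalDegree_mul _ _).trans ?_
          have := hdeg a
          omega
      · refine (totalDegree_mul _ _).trans ?_
        have := (IsHomogeneous.prod s l (fun _ => 1) fun i _ => hl i).totalDegree_le
        simpa using this
  rw [← sub_eq_zero, ← coeff_sub]
  rcases key with h | h
  · simp [h]
  · exact coeff_eq_zero_of_totalDegree_lt (h.trans_le hm)

/-- A nonzero `Q` spanned by products of the forms `B e`, each used at most twice, is not apolar to
all of them; by adjointness the pairing with such a product is a multiple of a coefficient of `Q`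
after the substitution `X v ↦ ∑ e, B e v * X e`, at an exponent bounded by `2`. -/
lemma exists_exponent {V E : Type*} [Fintype V] [Fintype E] (B : E → V → ℝ)
    {Q : MvPolynomial V ℝ} (hQ0 : Q ≠ 0)
    (hmem : Q ∈ Submodule.span ℝ ((fun T : Finset (E × Fin 2) => ∏ i ∈ T, linForm (B i.1)) ''
      {T | T ⊆ Finset.univ})) :
    ∃ K : E →₀ ℕ, (∀ e, K e ≤ 2) ∧ coeff K (aeval (fun v => linForm fun e => B e v) Q) ≠ 0 := by
  classical
  by_contra! hcon
  have : ∀ R ∈ Submodule.span ℝ ((fun T : Finset (E × Fin 2) => ∏ i ∈ T, linForm (B i.1)) ''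
      {T | T ⊆ Finset.univ}), apolar V R Q = 0 := by
    intro R hR
    induction hR using Submodule.span_induction with
    | mem x hx =>
      obtain ⟨T, -, rfl⟩ := hx
      set K : E →₀ ℕ := ∑ i ∈ T, Finsupp.single i.1 1 with hKdef
      have h1 : ∏ i ∈ T, linForm (B i.1) =
          aeval (fun e => linForm (B e)) (monomial K (1 : ℝ)) := by
        rw [hKdef, monomial_sum_one, map_prod]
        refine Finset.prod_congr rfl fun i _ => ?_
        change _ = aeval (fun e => linForm (B e)) (X i.1 : MvPolynomial E ℝ)
        rw [aeval_X]
      have hK2 : ∀ e, K e ≤ 2 := by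
        intro e
        have : K e = (T.filter fun i => i.1 = e).card := by
          simp only [hKdef, Finsupp.finsetSum_apply, Finsupp.single_apply, Finset.card_filter]
        rw [this]
        calc _ ≤ (({e} : Finset E) ×ˢ (Finset.univ : Finset (Fin 2))).card :=
              Finset.card_le_card fun i hi => Finset.mem_product.2
                ⟨Finset.mem_singleton.2 (Finset.mem_filter.1 hi).2, Finset.mem_univ _⟩
          _ = 2 := by simp
      simp only [h1]
      rw [apolar_aeval_linForm, apolar_monomial, hcon K hK2]
      simp
    | zero => simp
    | add x y _ _ hx hy => simp [hx, hy]
    | smul r x _ hx => simp [hx]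
  exact (apolar_self_pos hQ0).ne' (this Q hmem)

/-- Weights from lists of size three exist on a graph with edges `{p e, q e}` as soon as, for every
`h : V → ℝ`, the number of edges with `h (p e) ≠ h (q e)` is at most twice the number of edges with
`h (p e) + h (q e) ≠ 0`. -/
theorem exists_weighting {V E : Type*} [Fintype V] [Fintype E] [DecidableEq V] (p q : E → V)
    (hpq : ∀ e, p e ≠ q e)
    (H : ∀ h : V → ℝ, (Finset.univ.filter fun e => h (p e) ≠ h (q e)).card ≤
      2 * (Finset.univ.filter fun e => h (p e) + h (q e) ≠ 0).card)
    (c : V → ℝ) (L : E → Finset ℝ) (hL : ∀ e, (L e).card = 3) :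
    ∃ φ : E → ℝ, (∀ e, φ e ∈ L e) ∧ ∀ e,
      c (p e) + ∑ f, (if p f = p e ∨ q f = p e then φ f else 0) ≠
        c (q e) + ∑ f, (if p f = q e ∨ q f = q e then φ f else 0) := by
  classical
  -- `B e` is the form `y (p e) + y (q e)`, `D e` the form `y (p e) - y (q e)`
  let B : E → V → ℝ := fun e v => if p e = v ∨ q e = v then 1 else 0
  let D : E → V → ℝ := fun e => Pi.single (p e) 1 - Pi.single (q e) 1
  have hB : ∀ e (h : V → ℝ), ∑ v, B e v * h v = h (p e) + h (q e) := by
    intro e h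
    have : ∀ v, B e v * h v = (if v = p e then h v else 0) + (if v = q e then h v else 0) := by
      intro v
      have := hpq e
      simp only [B]
      grind
    simp [this, Finset.sum_add_distrib]
  have hD : ∀ e (h : V → ℝ), ∑ v, D e v * h v = h (p e) - h (q e) := by
    intro e h
    simp [D, sub_mul, Finset.sum_sub_distrib, Pi.single_apply]
  set Q : MvPolynomial V ℝ := ∏ e, linForm (D e) with hQ
  have hD0 : ∀ e, linForm (D e) ≠ 0 := fun e h0 => by
    have := congrFun (linForm_zero_iff.1 h0) (p e)
    simp [D, hpq e] at this
  have hQ0 : Q ≠ 0 := Finset.prod_ne_zero_iff.2 fun e _ => hD0 e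
  have hmem := mem_span_prod_linForm (Finset.univ : Finset (E × Fin 2)) (fun i => B i.1) Q (by
    intro h
    simp only [hQ, map_prod]
    refine (Polynomial.natDegree_prod_le _ _).trans ?_
    simp only [natDegree_lineShift_linForm, ← Finset.card_filter, hB, hD, sub_ne_zero]
    refine (H h).trans_eq ?_
    rw [show (Finset.univ.filter fun i : E × Fin 2 => h (p i.1) + h (q i.1) ≠ 0) =
      (Finset.univ.filter fun e => h (p e) + h (q e) ≠ 0) ×ˢ Finset.univ by ext; simp,
      Finset.card_product, mul_comm]
    simp)
  set θ : MvPolynomial V ℝ →ₐ[ℝ] MvPolynomial E ℝ := aeval (fun v => linForm fun e => B e v)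
    with hθ
  -- `θ` substitutes for the variable of a vertex the sum of the variables of its incident edges
  obtain ⟨K, hK2, hK⟩ : ∃ K : E →₀ ℕ, (∀ e, K e ≤ 2) ∧ coeff K (θ Q) ≠ 0 := by
    exact exists_exponent B hQ0 hmem
  have hθlin : ∀ d : V → ℝ, θ (linForm d) = linForm fun e => ∑ v, B e v * d v := by
    intro d
    have : ∀ v, θ (X v) = linForm fun e => B e v := fun v => aeval_X _ _
    have hC : ∀ r : ℝ, θ (C r) = C r := fun r => by
      rw [← algebraMap_eq, AlgHom.commutes, algebraMap_eq]
    rw [linForm, map_sum]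
    simp only [map_mul, hC, this]
    simp only [linForm, map_sum, map_mul, Finset.mul_sum, Finset.sum_mul]
    rw [Finset.sum_comm]
    exact Finset.sum_congr rfl fun e _ => Finset.sum_congr rfl fun v _ => by ring
  have hθQ : θ Q = ∏ e, θ (linForm (D e)) := by rw [hQ, map_prod]
  have hhom : ∀ e, (θ (linForm (D e))).IsHomogeneous 1 := fun e => by
    rw [hθlin]; exact linForm_isHomogeneous _
  set P : MvPolynomial E ℝ := ∏ e, (θ (linForm (D e)) + C (c (p e) - c (q e))) with hP
  have hKdeg : K.degree = Fintype.card E := by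
    have h1 : (θ Q).IsHomogeneous (Fintype.card E) := by
      rw [hθQ]
      simpa using IsHomogeneous.prod Finset.univ (fun e => θ (linForm (D e))) (fun _ => 1)
        fun e _ => hhom e
    by_contra hne
    exact hK (h1.coeff_eq_zero hne)
  have hPK : coeff K P ≠ 0 := by
    rw [hP, prod_add_C_top _ _ hhom _ _ (by rw [hKdeg]; rfl), ← hθQ]
    exact hK
  have hPdeg : P.totalDegree = K.degree := by
    refine le_antisymm ?_ (le_totalDegree (mem_support_iff.2 hPK))
    rw [hKdeg]
    refine (totalDegree_finsetProd _ _).trans ?_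
    refine (Finset.sum_le_sum (g := fun _ => 1) fun e _ => ?_).trans (by simp)
    exact (totalDegree_add _ _).trans (max_le (hhom e).totalDegree_le
      (by rw [totalDegree_C]; exact Nat.zero_le _))
  obtain ⟨φ, hφ, hev⟩ := combinatorial_nullstellensatz_exists_eval_nonzero P K hPK hPdeg L
    (fun e => by rw [hL]; have := hK2 e; omega)
  refine ⟨φ, hφ, fun e heq => hev ?_⟩
  rw [hP, map_prod]
  refine Finset.prod_eq_zero (Finset.mem_univ e) ?_
  have h1 : ∀ v, eval φ (θ (X v)) = ∑ f, (if p f = v ∨ q f = v then φ f else 0) := by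
    intro v
    rw [hθ, aeval_X, linForm, map_sum]
    refine Finset.sum_congr rfl fun f _ => ?_
    rw [map_mul, eval_C, eval_X]
    simp [B]
  have h2 : linForm (D e) = X (p e) - X (q e) := by
    simp [linForm, D, sub_mul, Pi.single_apply, Finset.sum_sub_distrib, apply_ite C]
  rw [h2, map_add, map_sub, map_sub, h1, h1, eval_C]
  linarith

/-! ### Dense graphs -/

/-- With `m x` the size of the fibre of `h` over `x`, this is `∑ x, m x * m (-x) ≤ ∑ x, m x ^ 2`. -/
lemma sum_card_fiber_neg_le {V : Type*} [Fintype V] (h : V → ℝ) :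
    ∑ u, ((Finset.univ.filter fun v => h v = -h u).card : ℝ) ≤
      ∑ u, ((Finset.univ.filter fun v => h v = h u).card : ℝ) := by
  classical
  set m : ℝ → ℝ := fun x => ((Finset.univ.filter fun v => h v = x).card : ℝ) with hm
  set S : Finset ℝ := Finset.univ.image h ∪ Finset.univ.image fun v => -h v with hS
  have hfib : ∀ f : ℝ → ℝ, ∑ u, f (h u) = ∑ x ∈ S, m x * f x := by
    intro f
    rw [← Finset.sum_fiberwise_of_maps_to (s := Finset.univ) (t := S) (g := h)
      (fun u _ => by simp [hS])]
    refine Finset.sum_congr rfl fun x _ => ?_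
    rw [Finset.sum_congr rfl (g := fun _ => f x) fun u hu => by rw [(Finset.mem_filter.1 hu).2],
      Finset.sum_const, nsmul_eq_mul]
  have hneg : ∑ x ∈ S, m (-x) * m (-x) = ∑ x ∈ S, m x * m x := by
    refine Finset.sum_nbij' (fun x => -x) (fun x => -x) ?_ ?_ (by simp) (by simp) (by simp) <;>
    · intro x hx
      simp only [hS, Finset.mem_union, Finset.mem_image, Finset.mem_univ, true_and] at hx ⊢
      rcases hx with ⟨v, rfl⟩ | ⟨v, rfl⟩
      · exact Or.inr ⟨v, rfl⟩
      · exact Or.inl ⟨v, by simp⟩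
  have h1 := hfib fun x => m (-x)
  have h2 := hfib m
  change ∑ u, m (-h u) ≤ ∑ u, m (h u)
  rw [h1, h2]
  have h3 : 2 * ∑ x ∈ S, m x * m (-x) ≤ ∑ x ∈ S, m x * m x + ∑ x ∈ S, m (-x) * m (-x) := by
    rw [Finset.mul_sum, ← Finset.sum_add_distrib]
    exact Finset.sum_le_sum fun x _ => by nlinarith [sq_nonneg (m x - m (-x))]
  linarith

/-- The counting condition of `exists_weighting`, summed over ordered pairs of adjacent vertices. -/
lemma dense_row_sum {V : Type*} [Fintype V] [DecidableEq V] (G : SimpleGraph V)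
    [DecidableRel G.Adj] (hdeg : ∀ v, (0.91 : ℝ) * Fintype.card V ≤ G.degree v) (h : V → ℝ) :
    0 ≤ ∑ u, ∑ v, if G.Adj u v then
      (2 * (if h u + h v ≠ 0 then 1 else 0) - (if h u ≠ h v then 1 else 0) : ℝ) else 0 := by
  have key := sum_card_fiber_neg_le h
  set m : V → ℝ := fun u => ((Finset.univ.filter fun v => h v = h u).card : ℝ)
  set m' : V → ℝ := fun u => ((Finset.univ.filter fun v => h v = -h u).card : ℝ)
  -- the row of `u` is nonnegative if `h u = 0`, and otherwise at least
  -- `2 deg u - n + m u - 2 m' u`, where `m u + m' u ≤ n`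
  have hrow : ∀ u, 3 / 2 * (m u - m' u) ≤ ∑ v, if G.Adj u v then
      (2 * (if h u + h v ≠ 0 then 1 else 0) - (if h u ≠ h v then 1 else 0) : ℝ) else 0 := by
    intro u
    by_cases hu : h u = 0
    · have : m u - m' u = 0 := by simp [m, m', hu]
      rw [this, mul_zero]
      refine Finset.sum_nonneg fun v _ => ?_
      rw [hu]
      simp only [zero_add, ne_eq, eq_comm (a := (0 : ℝ))]
      split_ifs <;> norm_num
    · have h1 : ∑ v, ((2 * (if G.Adj u v then 1 else 0) - 1) + (if h v = h u then 1 else 0)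
          - 2 * (if h v = -h u then 1 else 0) : ℝ) ≤ ∑ v, if G.Adj u v then
      (2 * (if h u + h v ≠ 0 then 1 else 0) - (if h u ≠ h v then 1 else 0) : ℝ) else 0 := by
        refine Finset.sum_le_sum fun v _ => ?_
        have e1 : h u + h v ≠ 0 ↔ ¬ h v = -h u := by
          rw [ne_eq, add_comm, add_eq_zero_iff_eq_neg]
        have e2 : h u ≠ h v ↔ ¬ h v = h u := by rw [ne_comm]
        rw [if_congr e1 rfl rfl, if_congr e2 rfl rfl]
        split_ifs <;> norm_num
      have h2 : ∑ v, ((2 * (if G.Adj u v then 1 else 0) - 1) + (if h v = h u then 1 else 0)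
          - 2 * (if h v = -h u then 1 else 0) : ℝ) =
          2 * G.degree u - Fintype.card V + m u - 2 * m' u := by
        simp only [Finset.sum_sub_distrib, Finset.sum_add_distrib, ← Finset.mul_sum,
          Finset.sum_boole, m, m', ← G.card_neighborFinset_eq_degree,
          G.neighborFinset_eq_filter]
        simp
      have h3 : m u + m' u ≤ Fintype.card V := by
        simp only [m, m']
        rw [← Nat.cast_add, ← Finset.card_union_of_disjoint]
        · exact_mod_cast Finset.card_le_univ _
        · rw [Finset.disjoint_filter]
          intro v _ ha hb
          apply hu
          linarith
      have h4 := hdeg u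
      have h5 : (0 : ℝ) ≤ Fintype.card V := Nat.cast_nonneg _
      linarith
  refine le_trans ?_ (Finset.sum_le_sum fun u _ => hrow u)
  rw [← Finset.mul_sum, Finset.sum_sub_distrib]
  linarith

/-- A symmetric function summed over ordered adjacent pairs counts every edge twice; `p` and `q`
select the two ends of each edge. -/
lemma sum_adj_eq_sum_edges {V : Type*} [Fintype V] [DecidableEq V] (G : SimpleGraph V)
    [DecidableRel G.Adj] (p q : G.edgeSet → V) (hpq : ∀ e : G.edgeSet, (e : Sym2 V) = s(p e, q e))
    (F : V → V → ℝ) (hF : ∀ u v, F u v = F v u) :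
    ∑ u, ∑ v, (if G.Adj u v then F u v else 0) = 2 * ∑ e, F (p e) (q e) := by
  have hne : ∀ e, p e ≠ q e := fun e => by
    have := e.2
    rw [hpq e, SimpleGraph.mem_edgeSet] at this
    exact this.ne
  have h1 : ∀ u v, (if G.Adj u v then F u v else 0) =
      ∑ e : G.edgeSet, if s(p e, q e) = s(u, v) then F u v else 0 := by
    intro u v
    split_ifs with h
    · rw [Finset.sum_eq_single ⟨s(u, v), h⟩]
      · rw [← hpq, if_pos rfl]
      · intro e _ he
        rw [← hpq, if_neg fun h' => he (Subtype.ext h')]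
      · simp
    · refine (Finset.sum_eq_zero fun e _ => ?_).symm
      rw [if_neg]
      intro h'
      rw [← hpq] at h'
      exact h (by rw [← SimpleGraph.mem_edgeSet, ← h']; exact e.2)
  simp only [h1]
  rw [Finset.sum_congr rfl fun u _ => Finset.sum_comm, Finset.sum_comm, Finset.mul_sum]
  refine Finset.sum_congr rfl fun e _ => ?_
  have h2 : ∀ u v, (if s(p e, q e) = s(u, v) then F u v else 0) =
      (if u = p e then if v = q e then F u v else 0 else 0) +
        (if u = q e then if v = p e then F u v else 0 else 0) := by
    intro u v
    have := hne e
    simp only [Sym2.eq_iff]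
    grind
  simp only [h2, Finset.sum_add_distrib]
  have h3 : ∀ a b : V, ∑ u, ∑ v, (if u = a then if v = b then F u v else 0 else 0) = F a b := by
    intro a b
    rw [Finset.sum_eq_single a (fun u _ hu => by simp [hu]) (by simp)]
    simp
  rw [h3, h3, hF (q e)]
  ring

theorem choosable_of_dense {V : Type*} [Fintype V] [DecidableEq V] (G : SimpleGraph V)
    [DecidableRel G.Adj] (hdeg : ∀ v, (0.91 : ℝ) * Fintype.card V ≤ G.degree v) :
    TotalWeightChoosable G 1 3 := by
  intro Lv Le hLv hLe
  have hex : ∀ e : G.edgeSet, ∃ u v, (e : Sym2 V) = s(u, v) := fun e => by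
    obtain ⟨⟨u, v⟩, -⟩ := e
    exact ⟨u, v, rfl⟩
  choose p q hpq using hex
  choose c hc using fun v => Finset.card_pos.1 ((hLv v).symm ▸ Nat.one_pos)
  have hne : ∀ e, p e ≠ q e := fun e => by
    have := e.2
    rw [hpq e, SimpleGraph.mem_edgeSet] at this
    exact this.ne
  obtain ⟨φ, hφ, hprop⟩ := exists_weighting p q hne (fun h => by
    have h1 := dense_row_sum G hdeg h
    rw [sum_adj_eq_sum_edges G p q hpq (fun u v =>
      (2 * (if h u + h v ≠ 0 then 1 else 0) - (if h u ≠ h v then 1 else 0) : ℝ))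
      (fun u v => by simp only [add_comm (h u), ne_comm (a := h u)])] at h1
    simp only [Finset.sum_sub_distrib, ← Finset.mul_sum, Finset.sum_boole] at h1
    have h2 : (((Finset.univ.filter fun e => h (p e) ≠ h (q e)).card : ℕ) : ℝ) ≤
      ((2 * (Finset.univ.filter fun e => h (p e) + h (q e) ≠ 0).card : ℕ) : ℝ) := by
      push_cast
      linarith
    exact_mod_cast h2) c (fun e => Le e) (fun e => hLe e (by simp))
  let fe : Sym2 V → ℝ := fun e => if he : e ∈ G.edgeSet then φ ⟨e, he⟩ else 0
  have hsum : ∀ v, ∑ e ∈ G.incidenceFinset v, fe e =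
      ∑ f, (if p f = v ∨ q f = v then φ f else 0) := by
    intro v
    rw [G.incidenceFinset_eq_filter, Finset.sum_filter,
      Finset.sum_subtype G.edgeFinset (p := fun e => e ∈ G.edgeSet) (by simp)]
    refine Finset.sum_congr rfl fun e _ => ?_
    have h1 : v ∈ (e : Sym2 V) ↔ (p e = v ∨ q e = v) := by
      rw [hpq e, Sym2.mem_iff, eq_comm (a := v), eq_comm (a := v)]
    rw [if_congr h1 rfl rfl]
    simp [fe]
  refine ⟨c, fe, hc, fun e he => ?_, fun i j hij => ?_⟩
  · rw [SimpleGraph.mem_edgeFinset] at he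
    simp only [fe, dif_pos he]
    exact hφ ⟨e, he⟩
  · have h1 := hprop ⟨s(i, j), hij⟩
    have h2 := hpq ⟨s(i, j), hij⟩
    rw [hsum, hsum]
    rcases Sym2.eq_iff.1 h2 with ⟨h3, h4⟩ | ⟨h3, h4⟩
    · rw [← h3, ← h4] at h1
      exact h1
    · rw [← h3, ← h4] at h1
      exact h1.symm

end

/-- Every sufficiently large Eulerian graph (connected, all degrees even) with minimum
degree at least `0.91 n` is total weight `(1,3)`-choosable. -/
theorem dense_eulerian_stmt1 :
    ∃ n₀ : ℕ, ∀ (V : Type) [Fintype V] [DecidableEq V] (G : SimpleGraph V)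
      [DecidableRel G.Adj],
      n₀ ≤ Fintype.card V →
      G.Connected → (∀ v : V, Even (G.degree v)) →
      (∀ v : V, (0.91 : ℝ) * (Fintype.card V : ℝ) ≤ (G.degree v : ℝ)) →
      TotalWeightChoosable G 1 3 := by
  exact ⟨0, fun V _ _ G _ _ _ _ hdeg => choosable_of_dense G hdeg⟩
end

section
/- There exists n₀ such that every graph G on n ≥ n₀ vertices with minimum degree at least 0.999 n is total weight (1,4)-choosable. -/
open MvPolynomial Finset

/-! ### The factorial-weighted pairing of polynomials -/

/-- The pairing `⟨f, g⟩ = ∑_α α! f_α g_α` of real polynomials, where `f_α` is the coefficient of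
`x^α` and `α! = ∏ i, (α i)!`; as a linear map in its second argument `f`, for fixed `g`. -/
noncomputable def pairing {σ : Type*} [Fintype σ] (g : MvPolynomial σ ℝ) :
    MvPolynomial σ ℝ →ₗ[ℝ] ℝ :=
  (basisMonomials σ ℝ).constr ℝ fun α => ((∏ i, (α i).factorial : ℕ) : ℝ) * coeff α g

section
variable {σ τ : Type*} [Fintype σ] [Fintype τ]

theorem pairing_monomial (g : MvPolynomial σ ℝ) (α : σ →₀ ℕ) (r : ℝ) :
    pairing g (monomial α r) = r * (((∏ i, (α i).factorial : ℕ) : ℝ) * coeff α g) := by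
  have h : monomial α r = r • (basisMonomials σ ℝ) α := by simp [smul_monomial]
  rw [h, map_smul, pairing, Module.Basis.constr_basis, smul_eq_mul]

theorem pairing_eq_sum (f g : MvPolynomial σ ℝ) :
    pairing g f = ∑ α ∈ f.support,
      coeff α f * (((∏ i, (α i).factorial : ℕ) : ℝ) * coeff α g) := by
  conv_lhs => rw [← support_sum_monomial_coeff f]
  rw [map_sum]
  exact sum_congr rfl fun α _ => pairing_monomial _ _ _

theorem pairing_self_pos (f : MvPolynomial σ ℝ) (hf : f ≠ 0) : 0 < pairing f f := by
  rw [pairing_eq_sum]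
  refine sum_pos (fun α hα => ?_) (support_nonempty.2 hf)
  have h1 : coeff α f ≠ 0 := mem_support_iff.1 hα
  have h2 : (0 : ℝ) < ((∏ i, (α i).factorial : ℕ) : ℝ) :=
    Nat.cast_pos.2 (prod_pos fun i _ => Nat.factorial_pos _)
  have h3 := mul_pos h2 (mul_self_pos.2 h1)
  linarith

theorem pairing_sum_left {ι : Type*} (s : Finset ι) (c : ι → ℝ) (g : ι → MvPolynomial σ ℝ)
    (f : MvPolynomial σ ℝ) :
    pairing (∑ i ∈ s, C (c i) * g i) f = ∑ i ∈ s, c i * pairing (g i) f := by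
  simp only [pairing_eq_sum, coeff_sum, coeff_C_mul, mul_sum]
  rw [sum_comm]
  exact sum_congr rfl fun _ _ => sum_congr rfl fun _ _ => by ring

/-- Multiplication by a variable is adjoint to the partial derivative. -/
theorem pairing_mul_X (f g : MvPolynomial σ ℝ) (i : σ) :
    pairing g (f * X i) = pairing (pderiv i g) f := by
  classical
  induction f using MvPolynomial.induction_on' with
  | add p q hp hq => simp [add_mul, hp, hq]
  | monomial α r =>
    rw [X, monomial_mul, mul_one, pairing_monomial, pairing_monomial, coeff_pderiv]
    have h : ∏ j, ((α + Finsupp.single i 1 : σ →₀ ℕ) j).factorial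
        = (α i + 1) * ∏ j, (α j).factorial := by
      rw [← mul_prod_erase univ _ (mem_univ i), ← mul_prod_erase univ (fun j => (α j).factorial)
        (mem_univ i)]
      have : ∀ j ∈ univ.erase i, ((α + Finsupp.single i 1 : σ →₀ ℕ) j).factorial = (α j).factorial := by
        intro j hj
        simp [(ne_of_mem_erase hj).symm]
      rw [prod_congr rfl this]
      simp [Nat.factorial_succ, mul_assoc]
    rw [h]; push_cast; ring

/-- The chain rule for a linear substitution with matrix `M`. -/
theorem pderiv_aeval_linear (M : τ → σ → ℝ) (Q : MvPolynomial τ ℝ) (e : σ) :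
    pderiv e (aeval (fun v => ∑ e, C (M v e) * X e : τ → MvPolynomial σ ℝ) Q)
      = ∑ v, C (M v e) *
        aeval (fun v => ∑ e, C (M v e) * X e : τ → MvPolynomial σ ℝ) (pderiv v Q) := by
  classical
  induction Q using MvPolynomial.induction_on with
  | C a => simp [algebraMap_eq]
  | add p q hp hq => simp only [map_add, hp, hq, mul_add, sum_add_distrib]
  | mul_X p w hp =>
    have h1 : pderiv e (∑ e', C (M w e') * X e' : MvPolynomial σ ℝ) = C (M w e) := by
      rw [map_sum, sum_eq_single e]
      · simp
      · intro b _ hb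
        simp [pderiv_X_of_ne hb]
      · simp
    simp only [map_mul, pderiv_mul, hp, aeval_X, h1, map_add, mul_add, sum_add_distrib]
    congr 1
    · rw [sum_mul]; exact sum_congr rfl fun _ _ => by ring
    · rw [sum_eq_single w]
      · simp [mul_comm]
      · intro b _ hb
        simp [pderiv_X_of_ne hb.symm]
      · simp

/-- Substitution along a matrix is adjoint to substitution along its transpose. -/
theorem pairing_adjoint (M : τ → σ → ℝ) (F : MvPolynomial σ ℝ) (Q : MvPolynomial τ ℝ) :
    pairing (aeval (fun v => ∑ e, C (M v e) * X e : τ → MvPolynomial σ ℝ) Q) F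
      = pairing Q (aeval (fun e => ∑ v, C (M v e) * X v : σ → MvPolynomial τ ℝ) F) := by
  induction F using MvPolynomial.induction_on generalizing Q with
  | C a =>
    rw [aeval_C, algebraMap_eq, C_apply, C_apply, pairing_monomial, pairing_monomial]
    have : coeff 0 (aeval (fun v => ∑ e, C (M v e) * X e : τ → MvPolynomial σ ℝ) Q)
        = coeff 0 Q := by
      induction Q using MvPolynomial.induction_on with
      | C a => simp [algebraMap_eq]
      | add p q hp hq => rw [map_add, coeff_add, coeff_add, hp, hq]
      | mul_X p w hp =>
        simp only [map_mul, aeval_X, ← constantCoeff_eq]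
        simp
    rw [this]; simp
  | add p q hp hq => rw [map_add, map_add, map_add, hp, hq]
  | mul_X p e hp =>
    rw [pairing_mul_X, pderiv_aeval_linear, pairing_sum_left, map_mul, aeval_X, mul_sum, map_sum]
    refine sum_congr rfl fun v _ => ?_
    rw [hp, mul_left_comm, C_mul', map_smul, pairing_mul_X, smul_eq_mul]
end

/-- The constants in a product of affine forms do not affect its top-degree coefficients. -/
theorem coeff_prod_linear_add_C {σ ι : Type*} (s : Finset ι) (l : ι → MvPolynomial σ ℝ) (c : ι → ℝ)
    (hl : ∀ i ∈ s, (l i).IsHomogeneous 1) (t : σ →₀ ℕ) (ht : t.degree = s.card) :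
    coeff t (∏ i ∈ s, (l i + C (c i))) = coeff t (∏ i ∈ s, l i) := by
  classical
  rw [prod_add, coeff_sum, sum_eq_single s]
  · simp
  · intro T hT hne
    have hc : T.card < s.card := card_lt_card ((mem_powerset.1 hT).ssubset_of_ne hne)
    rw [← map_prod, mul_comm, coeff_C_mul]
    have h := IsHomogeneous.prod T l (fun _ => 1) fun i hi => hl i (mem_powerset.1 hT hi)
    rw [h.coeff_eq_zero (by simp [ht]; omega), mul_zero]
  · simp

/-! ### From apexes with small load to choosability -/

/-- A choice of apexes `k e`, joined to both ends of `e`, such that each `f` is one of the two edges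
from `k e` to the ends of `e` for at most three edges `e`, gives `(1,4)`-choosability. -/
theorem totalWeightChoosable_of_apex {V : Type*} [Fintype V] [DecidableEq V] (G : SimpleGraph V)
    [DecidableRel G.Adj] (k : Sym2 V → V)
    (hadj : ∀ e ∈ G.edgeFinset, ∀ v ∈ e, G.Adj v (k e))
    (hload : ∀ f : Sym2 V, #{e ∈ G.edgeFinset | ∃ v ∈ e, s(v, k e) = f} ≤ 3) :
    TotalWeightChoosable G 1 4 := by
  intro Lv Le hLv hLe
  have hex : ∀ e : Sym2 V, ∃ p : V × V, s(p.1, p.2) = e := fun e =>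
    Sym2.ind (fun x y => ⟨(x, y), rfl⟩) e
  choose p hp using hex
  have hp1 : ∀ e, (p e).1 ∈ e := fun e => by
    have h := Sym2.mem_mk_left (p e).1 (p e).2
    rwa [hp e] at h
  have hp2 : ∀ e, (p e).2 ∈ e := fun e => by
    have h := Sym2.mem_mk_right (p e).1 (p e).2
    rwa [hp e] at h
  have hpne : ∀ e ∈ G.edgeFinset, (p e).1 ≠ (p e).2 := fun e he => by
    rw [← hp e, SimpleGraph.mem_edgeFinset, SimpleGraph.mem_edgeSet] at he
    exact he.ne
  have hfv : ∀ v, ∃ x, x ∈ Lv v := fun v => card_pos.1 (by rw [hLv v]; exact one_pos)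
  choose fv hfv using hfv
  -- `M` is the incidence matrix, and `S v` the sum of the edge variables at `v`.
  let M : V → Sym2 V → ℝ := fun v e => if e ∈ G.incidenceFinset v then 1 else 0
  let Q : MvPolynomial V ℝ := ∏ e ∈ G.edgeFinset, (X (p e).1 - X (p e).2)
  let F : MvPolynomial (Sym2 V) ℝ :=
    ∏ e ∈ G.edgeFinset, (X s((p e).1, k e) - X s((p e).2, k e))
  let S : V → MvPolynomial (Sym2 V) ℝ := fun v => ∑ e, C (M v e) * X e
  have hS : ∀ v, (S v).IsHomogeneous 1 := fun v =>
    IsHomogeneous.sum _ _ _ fun e _ => (isHomogeneous_X _ _).C_mul _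
  have hP : aeval S Q = ∏ e ∈ G.edgeFinset, (S (p e).1 - S (p e).2) := by
    simp only [Q, map_prod, map_sub, aeval_X]
  have hT : ∀ a b, G.Adj a b →
      ∑ v, C (M v s(a, b)) * X v = (X a + X b : MvPolynomial V ℝ) := by
    intro a b hab
    rw [sum_eq_add_of_mem a b (mem_univ _) (mem_univ _) hab.ne]
    · simp [M, SimpleGraph.mem_incidenceFinset, SimpleGraph.mem_incidenceSet,
        SimpleGraph.mk'_mem_incidenceSet_iff, hab]
    · intro c _ hc
      simp [M, SimpleGraph.mk'_mem_incidenceSet_iff, hc.1, hc.2]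
  have hF : aeval (fun e => ∑ v, C (M v e) * X v : Sym2 V → MvPolynomial V ℝ) F = Q := by
    simp only [F, Q, map_prod, map_sub, aeval_X]
    refine prod_congr rfl fun e he => ?_
    rw [hT _ _ (hadj e he _ (hp1 e)), hT _ _ (hadj e he _ (hp2 e))]
    ring
  have hQ : Q ≠ 0 := by
    refine prod_ne_zero_iff.2 fun e he => sub_ne_zero.2 fun h => hpne e he (X_injective h)
  have hpos : 0 < pairing (aeval S Q) F := by
    rw [pairing_adjoint, hF]
    exact pairing_self_pos Q hQ
  obtain ⟨α, hαF, hαP⟩ : ∃ α ∈ F.support, coeff α (aeval S Q) ≠ 0 := by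
    by_contra! h
    rw [pairing_eq_sum] at hpos
    refine hpos.ne' (sum_eq_zero fun α hα => ?_)
    rw [h α hα]; ring
  have hα3 : ∀ f, α f ≤ 3 := by
    intro f
    refine (monomial_le_degreeOf f hαF).trans ((degreeOf_prod_le _ _ _).trans
      (le_trans ?_ (hload f)))
    rw [card_filter]
    refine sum_le_sum fun e he => (degreeOf_sub_le _ _ _).trans ?_
    rw [degreeOf_X, degreeOf_X]
    split_ifs with h1 h2 h3 h3 <;> simp_all <;> grind
  -- The lists of non-edges are unconstrained, so variables of non-edges must not occur.
  have hα0 : ∀ f ∉ G.edgeFinset, α f = 0 := by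
    intro f hf
    refine Nat.le_zero.1 ((monomial_le_degreeOf f hαF).trans ((degreeOf_prod_le _ _ _).trans ?_))
    refine (sum_eq_zero fun e he => Nat.le_zero.1 ((degreeOf_sub_le _ _ _).trans ?_)).le
    have h1 := hadj e he _ (hp1 e)
    have h2 := hadj e he _ (hp2 e)
    rw [degreeOf_X, degreeOf_X, if_neg, if_neg]
    · simp
    · rintro rfl; exact hf (by simpa using h2)
    · rintro rfl; exact hf (by simpa using h1)
  have hlin : ∀ e ∈ G.edgeFinset, (S (p e).1 - S (p e).2).IsHomogeneous 1 := fun e _ =>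
    (hS _).sub (hS _)
  have hdeg : α.degree = G.edgeFinset.card := by
    have h := IsHomogeneous.prod G.edgeFinset _ (fun _ => 1) hlin
    rw [← hP] at h
    by_contra hne
    exact hαP (h.coeff_eq_zero (by simpa using hne))
  let P : MvPolynomial (Sym2 V) ℝ :=
    ∏ e ∈ G.edgeFinset, ((S (p e).1 - S (p e).2) + C (fv (p e).1 - fv (p e).2))
  have hcoeff : coeff α P ≠ 0 := by
    rw [coeff_prod_linear_add_C _ _ _ hlin α hdeg, ← hP]
    exact hαP
  have htot : P.totalDegree = α.degree := by
    refine le_antisymm ?_ ?_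
    · rw [hdeg]
      refine (totalDegree_finsetProd _ _).trans ?_
      rw [card_eq_sum_ones]
      refine sum_le_sum fun e he => (totalDegree_add _ _).trans ?_
      rw [totalDegree_C]
      exact max_le (hlin e he).totalDegree_le (Nat.zero_le _)
    · exact le_totalDegree (mem_support_iff.2 hcoeff)
  obtain ⟨fe, hfe, hne⟩ := combinatorial_nullstellensatz_exists_eval_nonzero P α hcoeff htot
    (fun f => if f ∈ G.edgeFinset then Le f else {0}) (by
      intro f
      by_cases hf : f ∈ G.edgeFinset
      · simp only [hf, if_true, hLe f hf]; exact Nat.lt_succ_of_le (hα3 f)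
      · simp only [hf, if_false, hα0 f hf]; simp)
  refine ⟨fv, fe, hfv, fun e he => by simpa [he] using hfe e, fun i j hij heq => hne ?_⟩
  have hev : ∀ v, eval fe (S v) = ∑ e ∈ G.incidenceFinset v, fe e := by
    intro v
    simp only [S, M, map_sum, map_mul, eval_C, eval_X, ite_mul, one_mul, zero_mul]
    rw [← sum_filter, filter_mem_eq_inter, univ_inter]
  have he : s(i, j) ∈ G.edgeFinset := by simpa using hij
  simp only [P, map_prod]
  refine prod_eq_zero he ?_
  simp only [map_add, map_sub, eval_C, hev]
  have h := hp s(i, j)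
  rcases Sym2.eq_iff.1 h with ⟨h1, h2⟩ | ⟨h1, h2⟩ <;> rw [h1, h2] <;> linarith

/-! ### Choosing the apexes -/

section
variable {V : Type*} [Fintype V] [DecidableEq V]

/-- The number of edges at `a` in `R` whose apex is `b`. When the edges of `R` use the apexes `k`,
the load on the edge `ab` is `load k R a b + load k R b a`. -/
def load (k : Sym2 V → V) (R : Finset (Sym2 V)) (a b : V) : ℕ :=
  #{c | s(a, c) ∈ R ∧ k s(a, c) = b}

theorem sum_load (k : Sym2 V → V) (R : Finset (Sym2 V)) (a : V) :
    ∑ b, load k R a b = #{c | s(a, c) ∈ R} := by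
  rw [card_eq_sum_card_fiberwise (f := fun c => k s(a, c)) (t := univ) (fun _ _ => by simp)]
  simp only [load, filter_filter]

theorem load_insert_le (k : Sym2 V → V) (R : Finset (Sym2 V)) (e : Sym2 V) (he : e ∉ R)
    (x a b : V) :
    load (Function.update k e x) (insert e R) a b
      ≤ load k R a b + if a ∈ e ∧ b = x then 1 else 0 := by
  have hsub : ({c | s(a, c) ∈ insert e R ∧ Function.update k e x s(a, c) = b} : Finset V) ⊆
      ({c | s(a, c) ∈ R ∧ k s(a, c) = b} : Finset V) ∪
      ({c | s(a, c) = e ∧ x = b} : Finset V) := by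
    intro c
    simp only [mem_filter_univ, mem_union, mem_insert]
    by_cases h : s(a, c) = e
    · simp only [h, Function.update_self]; tauto
    · simp [h]
  refine (card_le_card hsub).trans ((card_union_le _ _).trans (Nat.add_le_add_left ?_ _))
  split_ifs with h
  · refine card_le_one.2 fun c hc d hd => ?_
    simp only [mem_filter_univ] at hc hd
    exact Sym2.congr_right.1 (hc.1.trans hd.1.symm)
  · refine (card_eq_zero.2 (filter_eq_empty_iff.2 ?_)).le
    rintro c - ⟨rfl, rfl⟩
    exact h ⟨Sym2.mem_mk_left _ _, rfl⟩

/-- `k` assigns valid apexes outside the exceptional set `X` to the edges in `R`, no vertex being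
used as an apex too often, with load at most `3` on edges meeting `X` and at most `1` on the other
edges. The quantity bounded in `apex` is twice the number of edges with apex `b`. -/
structure ApexChoice (G : SimpleGraph V) (X : Finset V) (R : Finset (Sym2 V)) (k : Sym2 V → V) :
    Prop where
  adj : ∀ e ∈ R, ∀ v ∈ e, G.Adj v (k e)
  notMem : ∀ e ∈ R, k e ∉ X
  apex : ∀ b, 25 * ∑ a, load k R a b ≤ 4 * Fintype.card V + 50
  cap : ∀ a, ∀ b ∉ X, load k R a b + load k R b a ≤ if a ∈ X then 3 else 1

theorem ApexChoice.load_eq_zero {G : SimpleGraph V} {X : Finset V} {R : Finset (Sym2 V)}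
    {k : Sym2 V → V} (h : ApexChoice G X R k) (a : V) {b : V} (hb : b ∈ X) : load k R a b = 0 := by
  refine card_eq_zero.2 (filter_eq_empty_iff.2 ?_)
  rintro c - ⟨h1, h2⟩
  exact h.notMem _ h1 (h2 ▸ hb)

/-- At each vertex `a`, just over a third of the vertices `b` at most are such that `ab` can take no
further load: the total load at `a` is at most `n` if `a ∈ X`, since then `a` is never an apex, and
at most `0.121 n + 0.16 n + 2` otherwise. -/
theorem ApexChoice.card_saturated {G : SimpleGraph V} {X : Finset V} {R : Finset (Sym2 V)}
    {k : Sym2 V → V} (h : ApexChoice G X R k) (hn : 1000 ≤ Fintype.card V)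
    (hR : ∀ a ∉ X, 1000 * #{c | s(a, c) ∈ R} ≤ 121 * Fintype.card V) (a : V) :
    1000 * #{b | (if a ∈ X then 3 else 1) ≤ load k R a b + load k R b a}
      ≤ 334 * Fintype.card V := by
  have h1 : #{b | (if a ∈ X then 3 else 1) ≤ load k R a b + load k R b a} *
      (if a ∈ X then 3 else 1) ≤ #{c | s(a, c) ∈ R} + ∑ b, load k R b a := by
    rw [← sum_load k, ← sum_add_distrib, ← smul_eq_mul]
    refine le_trans (card_nsmul_le_sum _ _ _ fun b hb => (mem_filter.1 hb).2) ?_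
    exact sum_le_sum_of_subset (subset_univ _)
  by_cases ha : a ∈ X
  · simp only [ha, if_true] at h1 ⊢
    have h2 : ∑ b, load k R b a = 0 := sum_eq_zero fun b _ => h.load_eq_zero b ha
    have h3 : #{c | s(a, c) ∈ R} ≤ Fintype.card V := card_le_univ _
    omega
  · simp only [ha, if_false] at h1 ⊢
    have h2 := h.apex a
    have h3 := hR a ha
    omega

/-- At most `n / 5` vertices have reached the limit on their use as an apex. -/
theorem card_overloaded {R : Finset (Sym2 V)} {k : Sym2 V → V}
    (hn : 1000 ≤ Fintype.card V)
    (hR : 1000 * ∑ a, #{c | s(a, c) ∈ R} ≤ 32 * Fintype.card V ^ 2) :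
    5 * #{b | 4 * Fintype.card V ≤ 25 * ∑ a, load k R a b} ≤ Fintype.card V := by
  have h1 : #{b | 4 * Fintype.card V ≤ 25 * ∑ a, load k R a b} * (4 * Fintype.card V)
      ≤ 25 * ∑ a, #{c | s(a, c) ∈ R} := by
    simp only [← sum_load k]
    rw [sum_comm, mul_sum, ← smul_eq_mul]
    refine le_trans (card_nsmul_le_sum _ _ _ fun b hb => (mem_filter.1 hb).2) ?_
    exact sum_le_sum_of_subset (subset_univ _)
  refine Nat.le_of_mul_le_mul_left (c := Fintype.card V) ?_ (by omega)
  nlinarith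

/-- Apexes for a sparse set `R` of edges can be chosen greedily. -/
theorem exists_apexChoice (G : SimpleGraph V) [DecidableRel G.Adj] (X : Finset V)
    (R : Finset (Sym2 V)) (hn : 1000 ≤ Fintype.card V)
    (hX : 100 * #X ≤ Fintype.card V)
    (hN : ∀ a, 1000 * #{b | ¬ G.Adj a b} ≤ Fintype.card V)
    (hR : ∀ a ∉ X, 1000 * #{c | s(a, c) ∈ R} ≤ 121 * Fintype.card V)
    (hRtot : 1000 * ∑ a, #{c | s(a, c) ∈ R} ≤ 32 * Fintype.card V ^ 2) :
    ∃ k, ApexChoice G X R k := by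
  induction R using Finset.induction_on with
  | empty =>
    have hV : Nonempty V := Fintype.card_pos_iff.1 (by omega)
    exact ⟨fun _ => hV.some, by simp, by simp, by simp [load], by simp [load]⟩
  | insert e R he ih =>
    have hmono : ∀ a, #{c | s(a, c) ∈ R} ≤ #{c | s(a, c) ∈ insert e R} := fun a =>
      card_le_card (monotone_filter_right _ fun c _ hc => mem_insert_of_mem hc)
    have hR' : ∀ a ∉ X, 1000 * #{c | s(a, c) ∈ R} ≤ 121 * Fintype.card V := fun a ha =>
      (Nat.mul_le_mul_left _ (hmono a)).trans (hR a ha)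
    have hRtot' : 1000 * ∑ a, #{c | s(a, c) ∈ R} ≤ 32 * Fintype.card V ^ 2 :=
      (Nat.mul_le_mul_left _ (sum_le_sum fun a _ => hmono a)).trans hRtot
    obtain ⟨k, hk⟩ := ih hR' hRtot'
    obtain ⟨i, j, rfl⟩ : ∃ i j, s(i, j) = e := Sym2.ind (fun x y => ⟨x, y, rfl⟩) e
    let N : V → Finset V := fun a => {b | ¬ G.Adj a b}
    let sat : V → Finset V := fun a =>
      {b | (if a ∈ X then 3 else 1) ≤ load k R a b + load k R b a}
    let heavy : Finset V := {b | 4 * Fintype.card V ≤ 25 * ∑ a, load k R a b}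
    obtain ⟨x, hx⟩ : ∃ x, x ∉ X ∪ N i ∪ N j ∪ heavy ∪ sat i ∪ sat j := by
      by_contra! hall
      have h0 : Fintype.card V ≤ #(X ∪ N i ∪ N j ∪ heavy ∪ sat i ∪ sat j) := by
        rw [← card_univ]; exact card_le_card fun x _ => hall x
      have h1 := card_union_le (X ∪ N i ∪ N j ∪ heavy ∪ sat i) (sat j)
      have h2 := card_union_le (X ∪ N i ∪ N j ∪ heavy) (sat i)
      have h3 := card_union_le (X ∪ N i ∪ N j) heavy
      have h4 := card_union_le (X ∪ N i) (N j)
      have h5 := card_union_le X (N i)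
      have h6 : 1000 * #(sat i) ≤ _ := hk.card_saturated hn hR' i
      have h7 : 1000 * #(sat j) ≤ _ := hk.card_saturated hn hR' j
      have h8 : 5 * #heavy ≤ _ := card_overloaded hn hRtot'
      have h9 : 1000 * #(N i) ≤ _ := hN i
      have h10 : 1000 * #(N j) ≤ _ := hN j
      omega
    simp only [mem_union, not_or, N, sat, heavy, mem_filter_univ, not_not, not_le] at hx
    obtain ⟨⟨⟨⟨⟨hxX, hxi⟩, hxj⟩, hxo⟩, hsi⟩, hsj⟩ := hx
    have hsat : ∀ a ∈ s(i, j), G.Adj a x ∧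
        load k R a x + load k R x a < if a ∈ X then 3 else 1 := by
      intro a ha
      rcases Sym2.mem_iff.1 ha with rfl | rfl
      · exact ⟨hxi, hsi⟩
      · exact ⟨hxj, hsj⟩
    have hle := load_insert_le k R s(i, j) he x
    have hupd : ∀ e ∈ R, Function.update k s(i, j) x e = k e := by
      rintro e he'
      exact Function.update_of_ne (by rintro rfl; exact he he') _ _
    refine ⟨Function.update k s(i, j) x, ?_, ?_, ?_, ?_⟩
    · intro e' he' v hv
      rcases mem_insert.1 he' with rfl | he'
      · rw [Function.update_self]; exact (hsat v hv).1
      · rw [hupd e' he']; exact hk.adj e' he' v hv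
    · intro e' he'
      rcases mem_insert.1 he' with rfl | he'
      · rwa [Function.update_self]
      · rw [hupd e' he']; exact hk.notMem e' he'
    · intro b
      have h1 := sum_le_sum fun a (_ : a ∈ univ) => hle a b
      rw [sum_add_distrib] at h1
      have h2 : (∑ a : V, if a ∈ s(i, j) ∧ b = x then 1 else 0) ≤ if b = x then 2 else 0 := by
        rw [← card_filter]
        split_ifs with hb
        · refine (card_le_card (t := {i, j}) fun a ha => ?_).trans card_le_two
          simpa [hb] using ha
        · simp [hb]
      have h3 := hk.apex b
      split_ifs at h2 with hb
      · subst hb; omega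
      · omega
    · intro a b hb
      have h1 := hle a b
      have h2 := hle b a
      have h3 := hk.cap a b hb
      by_cases ha : a ∈ s(i, j) ∧ b = x
      · obtain ⟨ha, rfl⟩ := ha
        have h4 := (hsat a ha)
        have h5 : ¬ (b ∈ s(i, j) ∧ a = b) := fun h => h4.1.ne h.2
        rw [if_pos ⟨ha, rfl⟩] at h1
        rw [if_neg h5] at h2
        omega
      · rw [if_neg ha] at h1
        by_cases hb' : b ∈ s(i, j) ∧ a = x
        · obtain ⟨hb', rfl⟩ := hb'
          have h4 := (hsat b hb').2
          rw [if_neg hb] at h4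
          rw [if_pos ⟨hb', rfl⟩] at h2
          rw [if_neg hxX]
          omega
        · rw [if_neg hb'] at h2
          omega

/-- In a graph with at most `n / 1000` non-neighbours per vertex (the vertex itself included), apexes
can be chosen with load at most `3`. The initial choice is given by the commutative cancellative
operation `op`. -/
theorem exists_apex_s2 (G : SimpleGraph V) [DecidableRel G.Adj] (op : V → V → V)
    (hcomm : ∀ a b, op a b = op b a) (hinj : ∀ a, Function.Injective (op a))
    (hn : 1000 ≤ Fintype.card V)
    (hN : ∀ a, 1000 * #{b | ¬ G.Adj a b} ≤ Fintype.card V) :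
    ∃ k : Sym2 V → V, (∀ e ∈ G.edgeFinset, ∀ v ∈ e, G.Adj v (k e)) ∧
      ∀ f : Sym2 V, #{e ∈ G.edgeFinset | ∃ v ∈ e, s(v, k e) = f} ≤ 3 := by
  set n := Fintype.card V with hnd
  let base : Sym2 V → V := Sym2.lift ⟨op, hcomm⟩
  have hbase : ∀ a b, base s(a, b) = op a b := fun a b => rfl
  -- the vertices `i` for which many `j` are not joined to the initial apex of `ij`
  let X : Finset V := {i | n < 10 * #{j | ¬ G.Adj j (op i j)}}
  have hXdef : ∀ i ∉ X, 10 * #{j | ¬ G.Adj j (op i j)} ≤ n := by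
    intro i hi
    simpa [X] using hi
  -- pulling back along the injective map `op a` does not increase cardinality
  have hpull : ∀ (a : V) (p : V → Prop) [DecidablePred p], #{b | p (op a b)} ≤ #{c | p c} := by
    intro a p _
    refine card_le_card_of_injOn (op a) (fun b hb => ?_) (hinj a).injOn
    simpa using hb
  have hself : ∀ i, 1000 * #{j | ¬ G.Adj i (op i j)} ≤ n := fun i =>
    (Nat.mul_le_mul_left _ (hpull i fun c => ¬ G.Adj i c)).trans (hN i)
  -- For fixed `j` the map `i ↦ op i j` is injective, so the defects are few on average over `i`.
  have hswap : 1000 * ∑ i, #{j | ¬ G.Adj j (op i j)} ≤ n * n := by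
    have h : ∑ i, #{j | ¬ G.Adj j (op i j)} = ∑ j, #{i | ¬ G.Adj j (op j i)} := by
      simp only [card_filter]
      rw [sum_comm]
      simp only [hcomm]
    rw [h, mul_sum]
    refine (sum_le_sum fun j _ => hself j).trans ?_
    simp [hnd]
  have hX : 100 * #X ≤ n := by
    have h : #X * n ≤ 10 * ∑ i, #{j | ¬ G.Adj j (op i j)} := by
      rw [mul_sum, ← smul_eq_mul]
      refine le_trans (card_nsmul_le_sum _ _ _ fun i hi => (mem_filter.1 hi).2.le) ?_
      exact sum_le_sum_of_subset (subset_univ _)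
    refine Nat.le_of_mul_le_mul_left (c := n) ?_ (by omega)
    nlinarith
  -- the edges that keep their initial apex; `R` consists of the others
  let good : Sym2 V → Prop := fun e => base e ∉ X ∧ ∀ v ∈ e, v ∉ X ∧ G.Adj v (base e)
  classical
  let R : Finset (Sym2 V) := {e ∈ G.edgeFinset | ¬ good e}
  have hRdeg : ∀ i, #{j | s(i, j) ∈ R} ≤ (if i ∈ X then n else 0) + #X + #X
      + #{j | ¬ G.Adj i (op i j)} + #{j | ¬ G.Adj j (op i j)} := by
    intro i
    split_ifs with hi
    · have : #{j | s(i, j) ∈ R} ≤ n := card_le_univ _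
      omega
    have hsub : ({j | s(i, j) ∈ R} : Finset V) ⊆ X ∪ ({j | op i j ∈ X} : Finset V) ∪
        ({j | ¬ G.Adj i (op i j)} : Finset V) ∪ ({j | ¬ G.Adj j (op i j)} : Finset V) := by
      intro j hj
      simp only [R, good, mem_filter, Sym2.mem_iff, hbase, forall_eq_or_imp,
        forall_eq] at hj
      simp only [mem_union, mem_filter_univ]
      tauto
    have h1 := card_le_card hsub
    have h2 := card_union_le (X ∪ ({j | op i j ∈ X} : Finset V) ∪
        ({j | ¬ G.Adj i (op i j)} : Finset V)) ({j | ¬ G.Adj j (op i j)} : Finset V)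
    have h3 := card_union_le (X ∪ ({j | op i j ∈ X} : Finset V))
        ({j | ¬ G.Adj i (op i j)} : Finset V)
    have h4 := card_union_le X ({j | op i j ∈ X} : Finset V)
    have h5 : #{j | op i j ∈ X} ≤ #X := (hpull i (· ∈ X)).trans (by simp)
    omega
  have hR : ∀ a ∉ X, 1000 * #{c | s(a, c) ∈ R} ≤ 121 * n := by
    intro a ha
    have h1 := hRdeg a
    rw [if_neg ha] at h1
    have h2 := hself a
    have h3 := hXdef a ha
    omega
  have hRtot : 1000 * ∑ a, #{c | s(a, c) ∈ R} ≤ 32 * n ^ 2 := by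
    have h1 := sum_le_sum fun a (_ : a ∈ univ) => hRdeg a
    simp only [sum_add_distrib, sum_const, card_univ, ← hnd, smul_eq_mul] at h1
    have h2 : (∑ a, if a ∈ X then n else 0) = #X * n := by simp
    rw [h2] at h1
    have h3 : 1000 * ∑ i, #{j | ¬ G.Adj i (op i j)} ≤ n * n := by
      rw [mul_sum]
      refine (sum_le_sum fun j _ => hself j).trans ?_
      simp [hnd]
    nlinarith
  obtain ⟨k, hk⟩ := exists_apexChoice G X R hn hX hN hR hRtot
  let k' : Sym2 V → V := fun e => if e ∈ R then k e else base e
  have hgood : ∀ e ∈ G.edgeFinset, e ∉ R → good e := by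
    intro e he heR
    by_contra h
    exact heR (mem_filter.2 ⟨he, h⟩)
  have hbl : ∀ a b, #{c | s(a, c) ∈ G.edgeFinset \ R ∧ op a c = b}
      ≤ if a ∈ X ∨ b ∈ X then 0 else 1 := by
    intro a b
    split_ifs with h
    · refine (card_eq_zero.2 (filter_eq_empty_iff.2 ?_)).le
      rintro c - ⟨h1, rfl⟩
      have h2 := hgood _ (mem_sdiff.1 h1).1 (mem_sdiff.1 h1).2
      rcases h with h | h
      · exact (h2.2 a (Sym2.mem_mk_left _ _)).1 h
      · exact h2.1 h
    · refine card_le_one.2 fun c hc d hd => ?_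
      simp only [mem_filter_univ] at hc hd
      exact hinj a (hc.2.trans hd.2.symm)
  have hload : ∀ a b, load k' G.edgeFinset a b
      ≤ load k R a b + if a ∈ X ∨ b ∈ X then 0 else 1 := by
    intro a b
    refine le_trans ?_ (Nat.add_le_add_left (hbl a b) _)
    refine (card_le_card fun c hc => ?_).trans (card_union_le _ _)
    simp only [mem_filter_univ, mem_union, mem_sdiff, k', ← hbase] at hc ⊢
    by_cases h : s(a, c) ∈ R
    · left; simpa [h] using hc.2
    · right; simpa [h] using hc
  refine ⟨k', fun e he v hv => ?_, fun f => ?_⟩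
  · by_cases h : e ∈ R
    · simpa [k', h] using hk.adj e h v hv
    · simpa [k', h] using ((hgood e he h).2 v hv).2
  · induction f using Sym2.ind with | _ a b
    have hle : #{e ∈ G.edgeFinset | ∃ v ∈ e, s(v, k' e) = s(a, b)}
        ≤ load k' G.edgeFinset a b + load k' G.edgeFinset b a := by
      have hsub : ({e ∈ G.edgeFinset | ∃ v ∈ e, s(v, k' e) = s(a, b)} : Finset (Sym2 V)) ⊆
          ({c | s(a, c) ∈ G.edgeFinset ∧ k' s(a, c) = b} : Finset V).image (fun c => s(a, c)) ∪
          ({c | s(b, c) ∈ G.edgeFinset ∧ k' s(b, c) = a} : Finset V).image (fun c => s(b, c)) := by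
        intro e he
        obtain ⟨he, v, hv, hvf⟩ := mem_filter.1 he
        obtain ⟨w, rfl⟩ := hv
        rw [mem_union, mem_image, mem_image]
        rcases Sym2.eq_iff.1 hvf with ⟨rfl, h⟩ | ⟨rfl, h⟩
        · exact Or.inl ⟨w, by simpa [h] using he, rfl⟩
        · exact Or.inr ⟨w, by simpa [h] using he, rfl⟩
      exact (card_le_card hsub).trans ((card_union_le _ _).trans
        (Nat.add_le_add card_image_le card_image_le))
    refine hle.trans ((Nat.add_le_add (hload a b) (hload b a)).trans ?_)
    by_cases hb : b ∈ X
    · rw [if_pos (Or.inr hb), if_pos (Or.inl hb), hk.load_eq_zero a hb]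
      by_cases ha : a ∈ X
      · rw [hk.load_eq_zero b ha]; omega
      · have h := hk.cap b a ha
        rw [if_pos hb] at h
        omega
    · have h := hk.cap a b hb
      by_cases ha : a ∈ X
      · rw [if_pos ha] at h
        rw [if_pos (Or.inl ha), if_pos (Or.inr ha)]
        omega
      · rw [if_neg ha] at h
        rw [if_neg (by tauto), if_neg (by tauto)]
        omega
end

/-- Every sufficiently large graph with minimum degree at least `0.999 n` is total weight
`(1,4)`-choosable. -/
theorem dense_stmt2 :
    ∃ n₀ : ℕ, ∀ (V : Type) [Fintype V] [DecidableEq V] (G : SimpleGraph V)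
      [DecidableRel G.Adj],
      n₀ ≤ Fintype.card V →
      (∀ v : V, (0.999 : ℝ) * (Fintype.card V : ℝ) ≤ (G.degree v : ℝ)) →
      TotalWeightChoosable G 1 4 := by
  refine ⟨1000, fun V _ _ G _ hn hdeg => ?_⟩
  have hN : ∀ a, 1000 * #{b | ¬ G.Adj a b} ≤ Fintype.card V := by
    intro a
    have h1 : #{b | G.Adj a b} + #{b | ¬ G.Adj a b} = Fintype.card V := by
      rw [card_filter_add_card_filter_not, card_univ]
    have h2 : #{b | G.Adj a b} = G.degree a := by
      rw [← SimpleGraph.card_neighborFinset_eq_degree, SimpleGraph.neighborFinset_eq_filter]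
    have h3 := hdeg a
    rw [← h2] at h3
    have h4 : (#{b | G.Adj a b} : ℝ) + (#{b | ¬ G.Adj a b} : ℝ) = Fintype.card V := by
      exact_mod_cast h1
    have h5 : (1000 : ℝ) * (#{b | ¬ G.Adj a b} : ℝ) ≤ Fintype.card V := by linarith
    exact_mod_cast h5
  have : NeZero (Fintype.card V) := ⟨by omega⟩
  let φ : V ≃ Fin (Fintype.card V) := Fintype.equivFin V
  obtain ⟨k, hk1, hk2⟩ := exists_apex_s2 G (fun a b => φ.symm (φ a + φ b))
    (fun a b => by rw [add_comm]) (fun a b c h => by simpa using h) hn hN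
  exact totalWeightChoosable_of_apex G k hk1 hk2
end

section
/- Let A = (a_{ij}) be an m × n matrix with complex entries and let F_A be the polynomial ∏_{i=1}^m (Σ_{j=1}^n a_{ij} x_j) in ℂ[x_1,…,x_n]. Then for every K : {1,…,n} → ℕ with Σ_j K(j) = m, the coefficient of the monomial x^K = ∏_j x_j^{K(j)} in F_A equals per(A(K)) / K!, where K! = ∏_j K(j)!, A(K) is the m × m matrix whose columns consist of K(j) copies of the j-th column of A (for each j), and per denotes the permanent, per(M) = Σ_{σ ∈ S_m} ∏_{i=1}^m M_{i,σ(i)}. -/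
/-!
Expanding `F_A` over all functions `f : Fin m → Fin n` gives `∑_f (∏ i, a_{i, f i}) x^{content f}`,
where the content of `f` records the sizes of its fibres, so the coefficient of `x^K` is the sum of
`∏ i, a_{i, f i}` over the `f` with content `K` (`coeff_FPoly_eq_sum`).  Grouping the terms of
`per(A(K)) = ∑_σ ∏ i, a_{i, c (σ i)}` according to `f = c ∘ σ` produces the same products: the
functions of the form `c ∘ σ` are exactly those with the content `K` of `c`, and each arises from
`K!` permutations, since these form a coset of the stabilizer of `c` (`card_perm_comp_eq`).
-/

open scoped BigOperators

/-- The permanent of a square complex matrix. -/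
noncomputable def permanent {ι : Type*} [Fintype ι] [DecidableEq ι] (M : Matrix ι ι ℂ) : ℂ :=
  ∑ σ : Equiv.Perm ι, ∏ i, M i (σ i)

/-- The polynomial `F_A = ∏_{i=1}^m (Σ_{j=1}^n a_{ij} x_j)` associated to an `m × n`
complex matrix `A`. -/
noncomputable def FPoly {m n : ℕ} (A : Matrix (Fin m) (Fin n) ℂ) : MvPolynomial (Fin n) ℂ :=
  ∏ i : Fin m, ∑ j : Fin n, MvPolynomial.C (A i j) * MvPolynomial.X j

lemma card_fiber_comp_perm {m n : ℕ} (c : Fin m → Fin n) (σ : Equiv.Perm (Fin m)) (j : Fin n) :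
    (Finset.univ.filter fun p => c (σ p) = j).card = (Finset.univ.filter fun p => c p = j).card :=
  Finset.card_equiv σ (by simp)

lemma exists_perm_comp_eq {m n : ℕ} {c f : Fin m → Fin n}
    (h : ∀ j, (Finset.univ.filter fun p => f p = j).card
      = (Finset.univ.filter fun p => c p = j).card) :
    ∃ τ : Equiv.Perm (Fin m), c ∘ τ = f := by
  have e : ∀ j, Nonempty ({p // f p = j} ≃ {p // c p = j}) := fun j =>
    Fintype.card_eq.mp (by simpa only [Fintype.card_subtype] using h j)
  exact ⟨Equiv.ofFiberEquiv fun j => (e j).some,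
    funext fun p => Equiv.ofFiberEquiv_map (fun j => (e j).some) p⟩

/-- The permutations `σ` with `c ∘ σ = c ∘ τ` form a coset of the stabilizer of `c`, which is the
product of the symmetric groups on the fibres of `c`. -/
lemma card_perm_comp_eq {m n : ℕ} (c : Fin m → Fin n) (τ : Equiv.Perm (Fin m)) :
    (Finset.univ.filter fun σ : Equiv.Perm (Fin m) => c ∘ σ = c ∘ τ).card
      = ∏ j, ((Finset.univ.filter fun p => c p = j).card).factorial := by
  have hstab := DomMulAct.stabilizer_card c
  simp only [Fintype.card_subtype] at hstab
  rw [← hstab]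
  refine Finset.card_equiv (Equiv.mulRight τ⁻¹) fun σ => ?_
  simp only [Finset.mem_filter, Finset.mem_univ, true_and, Equiv.coe_mulRight, Equiv.Perm.coe_mul,
    funext_iff, Function.comp_apply]
  constructor
  · intro h p
    simpa using h (τ⁻¹ p)
  · intro h p
    simpa using h (τ p)

lemma coeff_FPoly_eq_sum {m n : ℕ} (A : Matrix (Fin m) (Fin n) ℂ) (K : Fin n → ℕ) :
    MvPolynomial.coeff (Finsupp.equivFunOnFinite.symm K) (FPoly A)
      = ∑ f : Fin m → Fin n with ∀ j, (Finset.univ.filter fun p => f p = j).card = K j,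
          ∏ i, A i (f i) := by
  have hmon : ∀ f : Fin m → Fin n,
      (∏ i, (MvPolynomial.C (A i (f i)) * MvPolynomial.X (f i) : MvPolynomial (Fin n) ℂ))
        = MvPolynomial.monomial (∑ i, Finsupp.single (f i) 1) (∏ i, A i (f i)) := by
    intro f
    rw [MvPolynomial.monomial_sum_index, Finset.prod_mul_distrib, map_prod]
    rfl
  have hcontent : ∀ f : Fin m → Fin n,
      (∑ i, Finsupp.single (f i) 1 = Finsupp.equivFunOnFinite.symm K)
        ↔ ∀ j, (Finset.univ.filter fun p => f p = j).card = K j := by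
    intro f
    simp [Finsupp.ext_iff, Finsupp.finsetSum_apply, Finsupp.single_apply]
  rw [FPoly, Finset.prod_univ_sum, Fintype.piFinset_univ, MvPolynomial.coeff_sum,
    Finset.sum_filter]
  refine Finset.sum_congr rfl fun f _ => ?_
  simp only [hmon, MvPolynomial.coeff_monomial, hcontent]

/-- For an `m × n` matrix `A` and `K : Fin n → ℕ` with `Σ_j K j = m`, the coefficient of
`x^K` in `F_A` equals `per(A(K)) / K!`, where `A(K)` is the `m × m` matrix whose columns
consist of `K j` copies of the `j`-th column of `A` (realized via any column-selection
function `c : Fin m → Fin n` taking the value `j` exactly `K j` times). -/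
theorem coeff_FPoly_eq_permanent_div {m n : ℕ} (A : Matrix (Fin m) (Fin n) ℂ)
    (K : Fin n → ℕ) (hK : ∑ j, K j = m)
    (c : Fin m → Fin n)
    (hc : ∀ j : Fin n, (Finset.univ.filter fun p => c p = j).card = K j) :
    MvPolynomial.coeff (Finsupp.equivFunOnFinite.symm K) (FPoly A)
      = permanent (A.submatrix id c) / (∏ j : Fin n, ((K j).factorial : ℂ)) := by
  have hK0 : (∏ j : Fin n, ((K j).factorial : ℂ)) ≠ 0 :=
    Finset.prod_ne_zero_iff.mpr fun j _ => Nat.cast_ne_zero.mpr (Nat.factorial_ne_zero _)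
  rw [eq_div_iff hK0, coeff_FPoly_eq_sum, permanent, Finset.sum_mul]
  -- Group the permutations `σ` by the function `c ∘ σ`, which always has content `K`.
  rw [← Finset.sum_fiberwise_of_maps_to (g := fun σ : Equiv.Perm (Fin m) => c ∘ σ)
    (t := Finset.univ.filter fun f : Fin m → Fin n =>
      ∀ j, (Finset.univ.filter fun p => f p = j).card = K j)
    (fun σ _ => by simp [card_fiber_comp_perm, hc])]
  refine Finset.sum_congr rfl fun f hf => ?_
  obtain ⟨τ, rfl⟩ := exists_perm_comp_eq (c := c) (f := f)
    fun j => ((Finset.mem_filter.mp hf).2 j).trans (hc j).symm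
  rw [Finset.sum_congr rfl (g := fun _ => ∏ i, A i ((c ∘ τ) i)), Finset.sum_const,
    card_perm_comp_eq, nsmul_eq_mul, mul_comm]
  · simp [hc]
  · intro σ hσ
    rw [← (Finset.mem_filter.mp hσ).2]
    rfl
end

section
/- Let G=(V,E) be a finite simple graph with V = {1,…,n} and let K : E → ℕ. Then K is sufficient for G (i.e., there exists K' : E → ℕ with K' ≤ K pointwise such that the coefficient of x^{K'} in P_G is nonzero) if and only if there exists a polynomial F in the vector space W_E^K with ⟨F, f_{A_G}⟩ ≠ 0. -/
/-!
The inner product is, up to conjugation, the apolar pairing `B(f, g) = ∑ K! f_K g_K`, for which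
multiplication by `x_v` is adjoint to `∂/∂x_v` (`apolar_mul_X`). Consequently, for a matrix `A`,
the substitutions `φ : y_e ↦ ∑ v, A e v • x_v` and `ψ : x_v ↦ ∑ e, A e v • y_e` are adjoint:
`B(φ p, g) = B(p, ψ g)`. This is proved by induction on `p`, with the chain rule for `ψ`
in the inductive step (`apolar_linSubst`).

Let `A` be the edge-vertex incidence matrix. Then `φ(y^K') = ∏ (x_i + x_j)^{K' e}` and
`ψ(f_{A_G}) = P_G`, so adjointness at `p = y^K'` reads
`⟨∏ (x_i + x_j)^{K' e}, f_{A_G}⟩ = K'! * coeff_{K'} P_G`. The conjugation is harmless because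
`f_{A_G}` has integer coefficients, and the restriction to total degree `|E|` because it is
homogeneous of that degree. As these products span `W_E^K`, the equivalence follows by linearity
of the inner product in its first argument.
-/

open scoped BigOperators

/-- The polynomial `P_G = ∏_{{i,j} ∈ E, i<j} (Σ_{e ∈ E(i)} x_e − Σ_{e ∈ E(j)} x_e)` in the
variables `{x_e : e ∈ E}`, where `E(v)` is the set of edges incident to `v`.  The endpoints
of an edge `e = {i,j}` with `i < j` are `Sym2.inf e = i` and `Sym2.sup e = j`. -/
noncomputable def PG {n : ℕ} (G : SimpleGraph (Fin n)) [DecidableRel G.Adj] :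
    MvPolynomial (↥G.edgeFinset) ℂ :=
  ∏ e : ↥G.edgeFinset,
    ((∑ e' : ↥G.edgeFinset, if Sym2.inf e.val ∈ e'.val then MvPolynomial.X e' else 0)
      - (∑ e' : ↥G.edgeFinset, if Sym2.sup e.val ∈ e'.val then MvPolynomial.X e' else 0))

/-- `K : E → ℕ` is sufficient for `G` if for some `K' ≤ K` the coefficient of `x^{K'}`
in `P_G` is nonzero. -/
noncomputable def SufficientFor {n : ℕ} (G : SimpleGraph (Fin n)) [DecidableRel G.Adj]
    (K : ↥G.edgeFinset → ℕ) : Prop :=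
  ∃ K' : ↥G.edgeFinset → ℕ, K' ≤ K ∧
    MvPolynomial.coeff (Finsupp.equivFunOnFinite.symm K') (PG G) ≠ 0

/-- The polynomial `f_{A_G} = ∏_{{i,j} ∈ E, i<j} (x_i − x_j)` in the vertex variables. -/
noncomputable def fAG {n : ℕ} (G : SimpleGraph (Fin n)) [DecidableRel G.Adj] :
    MvPolynomial (Fin n) ℂ :=
  ∏ e : ↥G.edgeFinset,
    (MvPolynomial.X (Sym2.inf e.val) - MvPolynomial.X (Sym2.sup e.val))

/-- `W_E^K`: the complex vector space spanned by the polynomials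
`∏_{{i,j} ∈ E, i<j} (x_i + x_j)^{K'(e)}` over all `K' ≤ K`. -/
noncomputable def WEK {n : ℕ} (G : SimpleGraph (Fin n)) [DecidableRel G.Adj]
    (K : ↥G.edgeFinset → ℕ) : Submodule ℂ (MvPolynomial (Fin n) ℂ) :=
  Submodule.span ℂ
    {p | ∃ K' : ↥G.edgeFinset → ℕ, K' ≤ K ∧
      p = ∏ e : ↥G.edgeFinset,
        (MvPolynomial.X (Sym2.inf e.val) + MvPolynomial.X (Sym2.sup e.val)) ^ K' e}

/-- The inner product `⟨f,g⟩ = Σ_{K : sum K = n} K! ⋅ coe(x^K, f) ⋅ conj(coe(x^K, g))` on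
(homogeneous degree-`n`) polynomials; the sum runs over all `K : ι → ℕ` with `Σ_j K j = n`
(all such `K` satisfy `K j ≤ n` for every `j`). -/
noncomputable def polyInner {ι : Type*} [Fintype ι] [DecidableEq ι] (n : ℕ)
    (f g : MvPolynomial ι ℂ) : ℂ :=
  ∑ K ∈ (Fintype.piFinset fun _ : ι => Finset.range (n + 1)).filter
      (fun K => ∑ j, K j = n),
    (∏ j, ((K j).factorial : ℂ))
      * MvPolynomial.coeff (Finsupp.equivFunOnFinite.symm K) f
      * (starRingEnd ℂ) (MvPolynomial.coeff (Finsupp.equivFunOnFinite.symm K) g)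

namespace GraphApolar

open MvPolynomial

variable {σ τ : Type*}

/-- The apolar functional `f ↦ ∑ L, L! * coeff L f * coeff L g`, linear in `f`; it is specified by
its values on monomials, so no finiteness bookkeeping is needed. -/
noncomputable def apolar [Fintype σ] (g : MvPolynomial σ ℂ) : MvPolynomial σ ℂ →ₗ[ℂ] ℂ :=
  (basisMonomials σ ℂ).constr ℂ (fun L => (∏ j, ((L j).factorial : ℂ)) * coeff L g)

lemma apolar_monomial [Fintype σ] (g : MvPolynomial σ ℂ) (L : σ →₀ ℕ) (a : ℂ) :
    apolar g (monomial L a) = a * ((∏ j, ((L j).factorial : ℂ)) * coeff L g) := by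
  have h : monomial L a = a • (basisMonomials σ ℂ L) := by
    simp [coe_basisMonomials, smul_monomial]
  rw [h, map_smul, apolar, Module.Basis.constr_basis, smul_eq_mul]

lemma apolar_add_right [Fintype σ] (g h f : MvPolynomial σ ℂ) :
    apolar (g + h) f = apolar g f + apolar h f := by
  induction f using MvPolynomial.induction_on' with
  | monomial L a => simp only [apolar_monomial, coeff_add]; ring
  | add p q hp hq => simp only [map_add, hp, hq]; ring

lemma apolar_smul_right [Fintype σ] (c : ℂ) (g f : MvPolynomial σ ℂ) :
    apolar (c • g) f = c * apolar g f := by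
  induction f using MvPolynomial.induction_on' with
  | monomial L a => simp only [apolar_monomial, coeff_smul, smul_eq_mul]; ring
  | add p q hp hq => simp only [map_add, hp, hq]; ring

lemma apolar_sum_right [Fintype σ] {κ : Type*} (s : Finset κ) (g : κ → MvPolynomial σ ℂ)
    (f : MvPolynomial σ ℂ) : apolar (∑ i ∈ s, g i) f = ∑ i ∈ s, apolar (g i) f := by
  classical
  induction s using Finset.induction_on with
  | empty => simpa using apolar_smul_right 0 0 f
  | insert i s hi ih => rw [Finset.sum_insert hi, Finset.sum_insert hi, apolar_add_right, ih]

/-- Multiplication by a variable is adjoint to the corresponding partial derivative. -/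
lemma apolar_mul_X [Fintype σ] (g f : MvPolynomial σ ℂ) (v : σ) :
    apolar g (f * X v) = apolar (pderiv v g) f := by
  classical
  induction f using MvPolynomial.induction_on' with
  | monomial L a =>
    have h1 : monomial L a * X v = monomial (L + Finsupp.single v 1) a := by
      rw [monomial_add_single, pow_one]
    have h2 : (∏ j, (((L + Finsupp.single v 1 : σ →₀ ℕ) j).factorial : ℂ))
        = ((L v : ℂ) + 1) * ∏ j, ((L j).factorial : ℂ) := by
      rw [← Finset.mul_prod_erase _ _ (Finset.mem_univ v),
        ← Finset.mul_prod_erase _ (fun j => ((L j).factorial : ℂ)) (Finset.mem_univ v)]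
      have h3 : ∏ j ∈ Finset.univ.erase v, (((L + Finsupp.single v 1 : σ →₀ ℕ) j).factorial : ℂ)
          = ∏ j ∈ Finset.univ.erase v, ((L j).factorial : ℂ) := by
        refine Finset.prod_congr rfl fun j hj => ?_
        have : j ≠ v := Finset.ne_of_mem_erase hj
        simp [this]
      rw [h3]
      simp [Nat.factorial_succ]
      ring
    rw [h1, apolar_monomial, apolar_monomial, h2, coeff_pderiv]
    ring
  | add p q hp hq => simp only [add_mul, map_add, hp, hq]

/-- The linear substitution `x_v ↦ ∑ e, A e v • y_e`. -/
noncomputable def linSubst [Fintype τ] (A : τ → σ → ℂ) :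
    MvPolynomial σ ℂ →ₐ[ℂ] MvPolynomial τ ℂ :=
  aeval fun v => ∑ e, A e v • X e

/-- Chain rule for a linear substitution. -/
lemma pderiv_linSubst [Fintype σ] [Fintype τ] (A : τ → σ → ℂ) (g : MvPolynomial σ ℂ) (e : τ) :
    pderiv e (linSubst A g) = ∑ v, A e v • linSubst A (pderiv v g) := by
  classical
  induction g using MvPolynomial.induction_on with
  | C a => simp [linSubst, algebraMap_eq]
  | add p q hp hq => simp only [map_add, hp, hq, smul_add, Finset.sum_add_distrib]
  | mul_X p w hp =>
    have hX : pderiv e (linSubst A (X w)) = C (A e w) := by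
      simp [linSubst, pderiv_X, Pi.single_apply, smul_eq_C_mul]
    have hW : ∀ v, linSubst A (pderiv v (X w)) = if v = w then 1 else 0 := by
      intro v
      by_cases h : v = w
      · subst h; simp
      · simp [h, pderiv_X_of_ne (Ne.symm h)]
    simp only [map_mul, pderiv_mul, map_add, hp, hX, hW, smul_add, Finset.sum_add_distrib,
      Finset.sum_mul, smul_mul_assoc]
    simp [smul_eq_C_mul, mul_comm]

/-- The substitutions given by a matrix and by its transpose are adjoint for the apolar pairing. -/
lemma apolar_linSubst [Fintype σ] [Fintype τ] (A : τ → σ → ℂ) (p : MvPolynomial τ ℂ)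
    (g : MvPolynomial σ ℂ) :
    apolar g (linSubst (fun v e => A e v) p) = apolar (linSubst A g) p := by
  induction p using MvPolynomial.induction_on generalizing g with
  | C a =>
    have h : coeff 0 (linSubst A g) = coeff 0 g := by
      rw [← constantCoeff_eq, ← constantCoeff_eq]
      induction g using MvPolynomial.induction_on with
      | C a => simp [linSubst, algebraMap_eq]
      | add p q hp hq => simp only [map_add, hp, hq]
      | mul_X p w hp => simp [linSubst]
    have h1 : linSubst (fun v e => A e v) (C a) = monomial 0 a := by
      simp [linSubst, algebraMap_eq]
    have h2 : (C a : MvPolynomial τ ℂ) = monomial 0 a := rfl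
    rw [h1, h2, apolar_monomial, apolar_monomial, h]
    simp
  | add p q hp hq => simp only [map_add, hp, hq]
  | mul_X p e hp =>
    have hX : linSubst (fun v e => A e v) (X e) = ∑ v, A e v • X v := by simp [linSubst]
    rw [map_mul, hX, Finset.mul_sum, map_sum, apolar_mul_X, pderiv_linSubst, apolar_sum_right]
    refine Finset.sum_congr rfl fun v _ => ?_
    rw [mul_smul_comm, map_smul, apolar_mul_X, hp, apolar_smul_right, smul_eq_mul]

/-- On a real form homogeneous of degree `m`, `polyInner m` agrees with the apolar pairing. -/
lemma polyInner_eq_apolar [Fintype σ] [DecidableEq σ] (m : ℕ) (f g : MvPolynomial σ ℂ)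
    (hg : g.IsHomogeneous m) (hr : MvPolynomial.map (starRingEnd ℂ) g = g) :
    polyInner m f g = apolar g f := by
  have hc : ∀ L, (starRingEnd ℂ) (coeff L g) = coeff L g := by
    intro L
    conv_rhs => rw [← hr]
    rw [coeff_map]
  unfold polyInner
  simp only [hc]
  induction f using MvPolynomial.induction_on' with
  | monomial L a =>
    rw [apolar_monomial, Finset.sum_eq_single (⇑L)]
    · have : Finsupp.equivFunOnFinite.symm ⇑L = L := by ext; simp
      rw [this, coeff_monomial, if_pos rfl]
      ring
    · intro K _ hK
      rw [coeff_monomial, if_neg]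
      · simp
      · rintro rfl
        exact hK (by ext; simp)
    · intro hL
      have h0 : coeff L g = 0 := by
        by_contra hne
        have hdeg : L.degree = m := by
          by_contra hd
          exact hne (hg.coeff_eq_zero hd)
        rw [Finsupp.degree_eq_sum] at hdeg
        refine hL (Finset.mem_filter.2 ⟨Fintype.mem_piFinset.2 fun j => ?_, hdeg⟩)
        have := Finset.single_le_sum (f := fun j => L j) (fun i _ => Nat.zero_le _)
          (Finset.mem_univ j)
        simp only [Finset.mem_range]
        omega
      have : Finsupp.equivFunOnFinite.symm ⇑L = L := by ext; simp
      rw [this, h0]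
      simp
  | add p q hp hq =>
    rw [map_add, ← hp, ← hq, ← Finset.sum_add_distrib]
    refine Finset.sum_congr rfl fun K _ => ?_
    rw [coeff_add]
    ring

variable {n : ℕ} (G : SimpleGraph (Fin n)) [DecidableRel G.Adj]

/-- The edge-vertex incidence matrix of `G`. -/
noncomputable def inc (e : ↥G.edgeFinset) (v : Fin n) : ℂ := if v ∈ e.val then 1 else 0

lemma linSubst_fAG : linSubst (inc G) (fAG G) = PG G := by
  simp [linSubst, fAG, PG, inc, map_prod, ite_smul]

lemma linSubst_monomial (K' : ↥G.edgeFinset → ℕ) :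
    linSubst (fun v e => inc G e v) (monomial (Finsupp.equivFunOnFinite.symm K') 1)
      = ∏ e : ↥G.edgeFinset, (X (Sym2.inf e.val) + X (Sym2.sup e.val)) ^ K' e := by
  rw [linSubst, aeval_monomial, map_one, one_mul, Finsupp.prod_fintype _ _ (by simp)]
  refine Finset.prod_congr rfl fun e _ => ?_
  congr 1
  obtain ⟨e, he⟩ := e
  induction e using Sym2.ind with
  | _ a b =>
    have hab : a ≠ b := by
      have : G.Adj a b := by simpa using he
      exact this.ne
    have h1 : ∑ v, inc G ⟨s(a, b), he⟩ v • (X v : MvPolynomial (Fin n) ℂ) = X a + X b := by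
      rw [← Finset.sum_pair hab]
      symm
      rw [← Finset.sum_subset (Finset.subset_univ ({a, b} : Finset (Fin n)))]
      · refine Finset.sum_congr rfl fun v hv => ?_
        have : v = a ∨ v = b := by simpa using hv
        simp [inc, this]
      · intro v _ hv
        have : ¬ (v = a ∨ v = b) := by simpa using hv
        simp [inc, this]
    rw [h1]
    rcases le_total a b with h | h
    · simp [h]
    · simp [h, add_comm]

lemma fAG_isHomogeneous : (fAG G).IsHomogeneous G.edgeFinset.card := by
  have h := IsHomogeneous.prod (Finset.univ : Finset ↥G.edgeFinset)
    (fun e => (X (Sym2.inf e.val) - X (Sym2.sup e.val) : MvPolynomial (Fin n) ℂ)) (fun _ => 1)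
    (fun e _ => (isHomogeneous_X ℂ _).sub (isHomogeneous_X ℂ _))
  simpa [fAG] using h

lemma fAG_real : MvPolynomial.map (starRingEnd ℂ) (fAG G) = fAG G := by
  simp [fAG, map_prod]

lemma polyInner_fAG (F : MvPolynomial (Fin n) ℂ) :
    polyInner G.edgeFinset.card F (fAG G) = apolar (fAG G) F :=
  polyInner_eq_apolar _ _ _ (fAG_isHomogeneous G) (fAG_real G)

/-- The inner product of a spanning product of `W_E^K` with `f_{A_G}` is `K'!` times a coefficient
of `P_G`. -/
lemma apolar_spanning (K' : ↥G.edgeFinset → ℕ) :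
    apolar (fAG G) (∏ e : ↥G.edgeFinset, (X (Sym2.inf e.val) + X (Sym2.sup e.val)) ^ K' e)
      = (∏ e, ((K' e).factorial : ℂ)) * coeff (Finsupp.equivFunOnFinite.symm K') (PG G) := by
  rw [← linSubst_monomial, apolar_linSubst, linSubst_fAG, apolar_monomial, one_mul]
  rfl

end GraphApolar

/-- `K` is sufficient for `G` iff `⟨F, f_{A_G}⟩ ≠ 0` for some `F ∈ W_E^K`, where the inner
product is taken on homogeneous polynomials of degree `|E|` in the vertex variables. -/
theorem sufficient_iff_inner_ne_zero {n : ℕ} (G : SimpleGraph (Fin n)) [DecidableRel G.Adj]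
    (K : ↥G.edgeFinset → ℕ) :
    SufficientFor G K ↔
      ∃ F ∈ WEK G K, polyInner G.edgeFinset.card F (fAG G) ≠ 0 := by
  constructor
  · rintro ⟨K', hK, hne⟩
    refine ⟨_, Submodule.subset_span ⟨K', hK, rfl⟩, ?_⟩
    rw [GraphApolar.polyInner_fAG, GraphApolar.apolar_spanning]
    refine mul_ne_zero (Finset.prod_ne_zero_iff.2 fun e _ => ?_) hne
    exact_mod_cast Nat.factorial_ne_zero _
  · rintro ⟨F, hF, hne⟩
    by_contra hs
    refine hne ?_
    have hle : WEK G K ≤ LinearMap.ker (GraphApolar.apolar (fAG G)) := by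
      refine Submodule.span_le.2 ?_
      rintro p ⟨K', hK, rfl⟩
      have h0 : MvPolynomial.coeff (Finsupp.equivFunOnFinite.symm K') (PG G) = 0 := by
        by_contra h
        exact hs ⟨K', hK, h⟩
      rw [SetLike.mem_coe, LinearMap.mem_ker, GraphApolar.apolar_spanning, h0, mul_zero]
    rw [GraphApolar.polyInner_fAG]
    exact hle hF
end

section
/- Let n ≥ 3 be odd and let K_n be the complete graph on vertex set {1,…,n}. Then K_n has a path covering family in which every path has length 2 and every edge of K_n is contained in exactly two of the paths; explicitly, assigning to each edge e = {i,j} with i < j the path (i, t_{i,j}, j), where t_{i,j} = i + (j−i)/2 if j−i is even and t_{i,j} = j + (n−(j−i))/2 (mod n) if j−i is odd, yields a path covering family 𝒫 of K_n with K_𝒫(e) = 2 for every edge e. -/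
/-!
The middle vertex `t` of the path assigned to `{i, j}` solves
`2 t ≡ i + j (mod n)` (`tMidFin_spec`), and uniquely so because `n` is odd. Hence the path of `e`
runs through the edge `{a, b}` exactly when one of `a`, `b` is the midpoint of `e` and the other
is an endpoint of `e`, i.e. when `e = {b, 2a - b}` or `e = {a, 2b - a}` (`mem_path_iff`). Since
`n` is odd and `a ≠ b`, these are two distinct edges of `K_n`, so `{a, b}` is covered exactly twice.
-/

open scoped BigOperators

/-- The middle vertex `t_{i,j}` of the path assigned to the edge `{i,j}` (`i < j`) of the
complete graph on `n` vertices (labels taken modulo `n`):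
`t_{i,j} = i + (j−i)/2` if `j − i` is even, and `t_{i,j} = j + (n−(j−i))/2 (mod n)`
if `j − i` is odd. -/
def tMid (n i j : ℕ) : ℕ :=
  if (j - i) % 2 = 0 then i + (j - i) / 2 else (j + (n - (j - i)) / 2) % n

/-- `t_{i,j}` as a vertex of the complete graph on `n` vertices (labels modulo `n`). -/
def tMidFin (n : ℕ) (hn : 0 < n) (i j : ℕ) : Fin n :=
  ⟨tMid n i j % n, Nat.mod_lt _ hn⟩

/-- The reflection `2a - b` of `b` through `a`, modulo `n`. -/
def reflFin {n : ℕ} (a b : Fin n) : Fin n :=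
  ⟨if 2 * a.val < b.val then 2 * a.val + n - b.val
    else if 2 * a.val < b.val + n then 2 * a.val - b.val else 2 * a.val - b.val - n, by
    split_ifs <;> omega⟩

/-- The congruence `2a - b ≡ reflFin a b (mod n)`, spelled out for representatives in `[0, n)`. -/
lemma reflFin_spec {n : ℕ} (a b : Fin n) :
    (reflFin a b).val + b.val = 2 * a.val ∨ (reflFin a b).val + b.val = 2 * a.val + n ∨
      (reflFin a b).val + b.val + n = 2 * a.val := by
  simp only [reflFin]
  split_ifs <;> omega

/-- The congruence `2 t ≡ i + j (mod n)` for the middle vertex `t`, spelled out for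
representatives in `[0, n)`. -/
lemma tMidFin_spec {n : ℕ} (hn : 0 < n) (hodd : n % 2 = 1) {i j : Fin n} (hij : i < j) :
    2 * (tMidFin n hn i j).val = i.val + j.val ∨
      2 * (tMidFin n hn i j).val = i.val + j.val + n ∨
      2 * (tMidFin n hn i j).val + n = i.val + j.val := by
  have hij' : i.val < j.val := hij
  simp only [tMidFin, tMid]
  split_ifs with h
  · rw [Nat.mod_eq_of_lt (by omega)]
    omega
  · rw [Nat.mod_mod]
    by_cases h' : j.val + (n - (j.val - i.val)) / 2 < n
    · rw [Nat.mod_eq_of_lt h']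
      omega
    · rw [Nat.mod_eq_sub_mod (by omega), Nat.mod_eq_of_lt (by omega)]
      omega

lemma tMidFin_ne {n : ℕ} (hn : 0 < n) (hodd : n % 2 = 1) {i j : Fin n} (hij : i < j) :
    i ≠ tMidFin n hn i j ∧ tMidFin n hn i j ≠ j := by
  have h := tMidFin_spec hn hodd hij
  have hij' : i.val < j.val := hij
  constructor <;> intro h' <;> rw [Fin.ext_iff] at h' <;> omega

/-- The edges whose assigned path contains `{a, b}` are `{b, 2a - b}` and `{a, 2b - a}`. -/
lemma mem_path_iff {n : ℕ} (hn : 0 < n) (hodd : n % 2 = 1) {i j a b : Fin n} (hij : i < j)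
    (hab : a ≠ b) :
    (s(a, b) = s(i, tMidFin n hn i j) ∨ s(a, b) = s(tMidFin n hn i j, j)) ↔
      (s(i, j) = s(b, reflFin a b) ∨ s(i, j) = s(a, reflFin b a)) := by
  have h := tMidFin_spec hn hodd hij
  have h1 := reflFin_spec a b
  have h2 := reflFin_spec b a
  have hij' : i.val < j.val := hij
  generalize tMidFin n hn i j = t at *
  generalize reflFin a b = r at *
  generalize reflFin b a = r' at *
  simp only [Sym2.eq_iff]
  constructor
  · rintro ((⟨rfl, rfl⟩ | ⟨rfl, rfl⟩) | (⟨rfl, rfl⟩ | ⟨rfl, rfl⟩))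
    · exact Or.inr (Or.inl ⟨rfl, Fin.ext (by omega)⟩)
    · exact Or.inl (Or.inl ⟨rfl, Fin.ext (by omega)⟩)
    · exact Or.inl (Or.inr ⟨Fin.ext (by omega), rfl⟩)
    · exact Or.inr (Or.inr ⟨Fin.ext (by omega), rfl⟩)
  · rintro ((⟨rfl, rfl⟩ | ⟨rfl, rfl⟩) | (⟨rfl, rfl⟩ | ⟨rfl, rfl⟩))
    · exact Or.inl (Or.inr ⟨Fin.ext (by omega), rfl⟩)
    · exact Or.inr (Or.inl ⟨Fin.ext (by omega), rfl⟩)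
    · exact Or.inl (Or.inl ⟨rfl, Fin.ext (by omega)⟩)
    · exact Or.inr (Or.inr ⟨rfl, Fin.ext (by omega)⟩)

lemma inf_lt_sup_of_mem {n : ℕ} {e : Sym2 (Fin n)}
    (he : e ∈ (⊤ : SimpleGraph (Fin n)).edgeFinset) :
    Sym2.inf e < Sym2.sup e ∧ s(Sym2.inf e, Sym2.sup e) = e := by
  induction e with
  | h x y =>
    have hxy : x ≠ y := by simpa using he
    rcases lt_or_gt_of_ne hxy with h | h
    · simp [h.le, h]
    · simp [h.le, h, Sym2.eq_swap]

/-- For odd `n ≥ 3`, assigning to each edge `e = {i,j}` (with `i = Sym2.inf e < j = Sym2.sup e`)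
of the complete graph `K_n` the length-two path `(i, t_{i,j}, j)` yields a path covering
family in which every path has length `2` and every edge lies on exactly two of the
paths. -/
theorem completeGraph_pathCoveringFamily (n : ℕ) (hn : 3 ≤ n) (hodd : Odd n) :
    ∃ P : ∀ e ∈ (⊤ : SimpleGraph (Fin n)).edgeFinset,
        (⊤ : SimpleGraph (Fin n)).Walk (Sym2.inf e) (Sym2.sup e),
      (∀ e he, (P e he).IsPath ∧ (P e he).length = 2 ∧
        (P e he).support
          = [Sym2.inf e, tMidFin n (by omega) (Sym2.inf e).val (Sym2.sup e).val,
              Sym2.sup e]) ∧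
      (∀ e' ∈ (⊤ : SimpleGraph (Fin n)).edgeFinset,
        (∑ e ∈ (⊤ : SimpleGraph (Fin n)).edgeFinset.attach,
          if e' ∈ (P e.1 e.2).edges then 1 else 0) = 2) := by
  have hn0 : 0 < n := by omega
  have hodd' : n % 2 = 1 := Nat.odd_iff.mp hodd
  refine ⟨fun e he =>
    .cons (v := tMidFin n hn0 (Sym2.inf e).val (Sym2.sup e).val)
      (tMidFin_ne hn0 hodd' (inf_lt_sup_of_mem he).1).1
      (.cons (tMidFin_ne hn0 hodd' (inf_lt_sup_of_mem he).1).2 .nil), ?_, ?_⟩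
  · intro e he
    have hlt := (inf_lt_sup_of_mem he).1
    have hne := tMidFin_ne hn0 hodd' hlt
    refine ⟨?_, rfl, rfl⟩
    simp [SimpleGraph.Walk.isPath_def, hne.1, hne.2, hlt.ne]
  · intro e' he'
    induction e' with
    | h a b =>
      have hab : a ≠ b := by simpa using he'
      have hab' : a.val ≠ b.val := fun h => hab (Fin.ext h)
      have h1 := reflFin_spec a b
      have h2 := reflFin_spec b a
      -- The summand does not depend on the membership proof once it is stated via reflections.
      have hcongr : ∀ e ∈ (⊤ : SimpleGraph (Fin n)).edgeFinset.attach,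
          (if s(a, b) ∈ (SimpleGraph.Walk.cons (G := (⊤ : SimpleGraph (Fin n)))
              (v := tMidFin n hn0 (Sym2.inf e.1).val (Sym2.sup e.1).val)
              (tMidFin_ne hn0 hodd' (inf_lt_sup_of_mem e.2).1).1
              (.cons (tMidFin_ne hn0 hodd' (inf_lt_sup_of_mem e.2).1).2 .nil)).edges
            then 1 else 0) =
          (fun f : Sym2 (Fin n) =>
            if f = s(b, reflFin a b) ∨ f = s(a, reflFin b a) then 1 else 0) e.1 := by
        rintro ⟨e, he⟩ -
        have hlt := inf_lt_sup_of_mem he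
        have key := mem_path_iff hn0 hodd' hlt.1 hab
        rw [hlt.2] at key
        simp only [SimpleGraph.Walk.edges_cons, SimpleGraph.Walk.edges_nil, List.mem_cons,
          List.not_mem_nil, or_false, key]
      rw [Finset.sum_congr rfl hcongr, Finset.sum_attach _ (fun f : Sym2 (Fin n) =>
            if f = s(b, reflFin a b) ∨ f = s(a, reflFin b a) then 1 else 0),
        Finset.sum_boole]
      have hfilter : (⊤ : SimpleGraph (Fin n)).edgeFinset.filter
          (fun f => f = s(b, reflFin a b) ∨ f = s(a, reflFin b a)) =
          {s(b, reflFin a b), s(a, reflFin b a)} := by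
        ext f
        simp only [Finset.mem_filter, Finset.mem_insert, Finset.mem_singleton,
          and_iff_right_iff_imp]
        rintro (rfl | rfl)
        · simp only [SimpleGraph.mem_edgeFinset, SimpleGraph.mem_edgeSet, SimpleGraph.top_adj,
            ne_eq, Fin.ext_iff]
          omega
        · simp only [SimpleGraph.mem_edgeFinset, SimpleGraph.mem_edgeSet, SimpleGraph.top_adj,
            ne_eq, Fin.ext_iff]
          omega
      rw [hfilter, Finset.card_pair]
      · rfl
      · simp only [ne_eq, Sym2.eq_iff, Fin.ext_iff]
        omega
end

section
/- Let G=(V,E) be a finite simple graph with V = {1,…,n} and suppose there exists K : V ∪ E → ℕ with Σ_{z ∈ V ∪ E} K(z) = |E|, K(v) ≤ k−1 for every vertex v, and K(e) ≤ k'−1 for every edge e, such that the coefficient of the monomial ∏_{z ∈ V ∪ E} x_z^{K(z)} in P̃_G is nonzero. Then G is total weight (k,k')-choosable. -/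
/-!
This is an application of Alon's Combinatorial Nullstellensatz. The polynomial `PtG G` is a product
of `|E|` linear forms, so its total degree is at most `|E|` (`totalDegree_PtG_le`), and the monomial
with exponents `K` and nonzero coefficient has this maximal degree. As `K z` is smaller than the
size of the list at `z`, some choice of weights from the lists makes `PtG G` nonzero. The factors of
this value are the differences of the total weights at the two ends of the edges, so the
weighting is proper.
-/

open scoped BigOperators

/-- The polynomial
`P̃_G = ∏_{{i,j} ∈ E, i<j} ((x_i + Σ_{e ∈ E(i)} x_e) − (x_j + Σ_{e ∈ E(j)} x_e))`
in the variables `{x_z : z ∈ V ∪ E}` (vertex variables on the left of the sum type, edge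
variables on the right).  The endpoints of an edge `e = {i,j}` with `i < j` are
`Sym2.inf e = i` and `Sym2.sup e = j`. -/
noncomputable def PtG {n : ℕ} (G : SimpleGraph (Fin n)) [DecidableRel G.Adj] :
    MvPolynomial (Fin n ⊕ ↥G.edgeFinset) ℂ :=
  ∏ e : ↥G.edgeFinset,
    ((MvPolynomial.X (Sum.inl (Sym2.inf e.val))
        + ∑ e' : ↥G.edgeFinset,
            if Sym2.inf e.val ∈ e'.val then MvPolynomial.X (Sum.inr e') else 0)
      - (MvPolynomial.X (Sum.inl (Sym2.sup e.val))
        + ∑ e' : ↥G.edgeFinset,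
            if Sym2.sup e.val ∈ e'.val then MvPolynomial.X (Sum.inr e') else 0))

theorem totalDegree_PtG_le {n : ℕ} (G : SimpleGraph (Fin n)) [DecidableRel G.Adj] :
    (PtG G).totalDegree ≤ G.edgeFinset.card := by
  have hlin : ∀ i : Fin n, (MvPolynomial.X (Sum.inl i) + ∑ e' : ↥G.edgeFinset,
      if i ∈ e'.val then MvPolynomial.X (Sum.inr e') else 0 :
        MvPolynomial (Fin n ⊕ ↥G.edgeFinset) ℂ).totalDegree ≤ 1 := by
    intro i
    refine (MvPolynomial.totalDegree_add _ _).trans (max_le (by simp) ?_)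
    refine MvPolynomial.totalDegree_finsetSum_le fun e' _ => ?_
    split_ifs <;> simp
  refine (MvPolynomial.totalDegree_finsetProd _ _).trans ?_
  refine (Finset.sum_le_card_nsmul _ _ 1 fun e _ => ?_).trans (by simp)
  exact (MvPolynomial.totalDegree_sub _ _).trans (max_le (hlin _) (hlin _))

/-- If for some `K : V ∪ E → ℕ` with `Σ_z K z = |E|`, `K v ≤ k − 1` (i.e. `K v < k`) for every vertex
`v` and `K e ≤ k' − 1` (i.e. `K e < k'`) for every edge `e`, the coefficient of `∏_z x_z^{K z}` in `P̃_G` is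
nonzero, then `G` is total weight `(k,k')`-choosable. -/
theorem choosable_of_coeff_ne_zero {n k k' : ℕ} (G : SimpleGraph (Fin n))
    [DecidableRel G.Adj] (K : Fin n ⊕ ↥G.edgeFinset → ℕ)
    (hsum : ∑ z, K z = G.edgeFinset.card)
    (hv : ∀ v : Fin n, K (Sum.inl v) < k)
    (he : ∀ e : ↥G.edgeFinset, K (Sum.inr e) < k')
    (hcoe : MvPolynomial.coeff (Finsupp.equivFunOnFinite.symm K) (PtG G) ≠ 0) :
    TotalWeightChoosable G k k' := by
  intro Lv Le hLv hLe
  -- The lists are real while `PtG G` has complex coefficients, so they are pushed into `ℂ`.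
  let S : Fin n ⊕ ↥G.edgeFinset → Finset ℂ :=
    Sum.elim (fun v => (Lv v).map ⟨_, Complex.ofReal_injective⟩)
      (fun e => (Le e.val).map ⟨_, Complex.ofReal_injective⟩)
  have hdeg : (PtG G).totalDegree = (Finsupp.equivFunOnFinite.symm K).degree := by
    have hK : (Finsupp.equivFunOnFinite.symm K).degree = G.edgeFinset.card := by
      rw [Finsupp.degree_eq_sum, ← hsum]
      rfl
    refine le_antisymm (hK ▸ totalDegree_PtG_le G) ?_
    exact MvPolynomial.le_totalDegree (MvPolynomial.mem_support_iff.mpr hcoe)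
  obtain ⟨s, hs, hne⟩ := MvPolynomial.combinatorial_nullstellensatz_exists_eval_nonzero
    (PtG G) _ hcoe hdeg S (by
      rintro (v | e)
      · simpa [S, hLv] using hv v
      · simpa [S, hLe e.val e.property] using he e)
  have hsv : ∀ v, ∃ a ∈ Lv v, (a : ℂ) = s (Sum.inl v) := fun v => by
    simpa [S] using hs (Sum.inl v)
  have hse : ∀ e : ↥G.edgeFinset, ∃ a ∈ Le e.val, (a : ℂ) = s (Sum.inr e) := fun e => by
    simpa [S] using hs (Sum.inr e)
  choose fv hfv hfv' using hsv
  choose fe hfe hfe' using hse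
  -- Values of the edge weighting off the edge set are irrelevant.
  let fe₀ : Sym2 (Fin n) → ℝ := fun e => if h : e ∈ G.edgeFinset then fe ⟨e, h⟩ else 0
  have hfe₀ : ∀ e : ↥G.edgeFinset, fe₀ e.val = fe e := fun e => dif_pos e.property
  refine ⟨fv, fe₀, hfv, fun e h => ?_, ?_⟩
  · rw [hfe₀ ⟨e, h⟩]
    exact hfe ⟨e, h⟩
  have hsumE : ∀ i : Fin n,
      (∑ e' : ↥G.edgeFinset, if i ∈ e'.val then s (Sum.inr e') else 0)
        = ((∑ e ∈ G.incidenceFinset i, fe₀ e : ℝ) : ℂ) := by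
    intro i
    rw [G.incidenceFinset_eq_filter, Finset.sum_filter, ← Finset.sum_coe_sort G.edgeFinset]
    push_cast
    refine Finset.sum_congr rfl fun e _ => ?_
    split_ifs
    · rw [hfe₀, hfe']
    · simp
  -- The total weight as a plain function of the vertex, so that its argument can be rewritten
  -- without disturbing the `Fintype` instance inside `incidenceFinset`.
  let W : Fin n → ℝ := fun i => fv i + ∑ e ∈ G.incidenceFinset i, fe₀ e
  have key : ∀ e : ↥G.edgeFinset, W (Sym2.inf e.val) ≠ W (Sym2.sup e.val) := by
    intro e heq
    rw [PtG, map_prod, Finset.prod_ne_zero_iff] at hne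
    apply hne e (Finset.mem_univ e)
    simp only [map_sub, map_add, map_sum, MvPolynomial.eval_X,
      apply_ite (MvPolynomial.eval s), map_zero]
    rw [hsumE, hsumE, ← hfv', ← hfv', sub_eq_zero]
    exact_mod_cast heq
  intro i j hij
  change W i ≠ W j
  have h : W (i ⊓ j) ≠ W (i ⊔ j) :=
    key ⟨s(i, j), G.mem_edgeFinset.mpr (G.mem_edgeSet.mpr hij)⟩
  rcases le_total i j with hle | hle
  · rw [inf_eq_left.mpr hle, sup_eq_right.mpr hle] at h
    exact h
  · rw [inf_eq_right.mpr hle, sup_eq_left.mpr hle] at h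
    exact h.symm
end
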